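/- arXiv:1508.02732 — 5 statements merged into one kernel-verified Lean document; each statement's English description precedes it below -/
import Mathlib

section
/- (Gordon decomposition, flat spacetime.) Let Ψ : ℝ⁴ → ℂ⁴ be twice continuously differentiable and satisfy the flat-spacetime Dirac equation iℏ ∑_{μ=0}^{3} γ^μ ∂_μΨ = mΨ. Define σ^{μν} := (i/2)(γ^μγ^ν − γ^νγ^μ), the polarization current j_pol^μ := (ℏ/(2m)) ∑_{ν=0}^{3} ∂_ν(Ψ̄ σ^{μν} Ψ), and the convection current j_con^μ := (ℏ/(2mi)) ((∂^μΨ̄)Ψ − Ψ̄(∂^μΨ)). Then for each μ = 0,1,2,3: (i) Ψ̄γ^μΨ = j_pol^μ + j_con^μ; moreover (ii) ∑_{μ=0}^{3} ∂_μ j_pol^μ = 0 and (iii) ∑_{μ=0}^{3} ∂_μ j_con^μ = 0, i.e. the Dirac current decomposes into a polarization current and a convection current which are separately conserved. -/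
open Matrix

noncomputable section

/-- The standard Dirac gamma matrices. -/
def diracGamma : Fin 4 → Matrix (Fin 4) (Fin 4) ℂ
  | 0 => !![1, 0, 0, 0; 0, 1, 0, 0; 0, 0, -1, 0; 0, 0, 0, -1]
  | 1 => !![0, 0, 0, 1; 0, 0, 1, 0; 0, -1, 0, 0; -1, 0, 0, 0]
  | 2 => !![0, 0, 0, -Complex.I; 0, 0, Complex.I, 0;
            0, Complex.I, 0, 0; -Complex.I, 0, 0, 0]
  | 3 => !![0, 0, 1, 0; 0, 0, 0, -1; -1, 0, 0, 0; 0, 1, 0, 0]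

/-- Partial derivative in the μ-th coordinate direction of ℝ⁴. -/
def pd {E : Type*} [NormedAddCommGroup E] [NormedSpace ℝ E]
    (μ : Fin 4) (f : (Fin 4 → ℝ) → E) (x : Fin 4 → ℝ) : E :=
  fderiv ℝ f x (Pi.single μ 1)

/-- The Dirac adjoint Ψ̄ := Ψ†γ⁰, a row vector. -/
def diracAdjoint (Ψ : (Fin 4 → ℝ) → (Fin 4 → ℂ)) (x : Fin 4 → ℝ) : Fin 4 → ℂ :=
  Matrix.vecMul (fun i => star (Ψ x i)) (diracGamma 0)

/-- σ^{μν} := (i/2)(γ^μγ^ν − γ^νγ^μ). -/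
def diracSigma (μ ν : Fin 4) : Matrix (Fin 4) (Fin 4) ℂ :=
  (Complex.I / 2) • (diracGamma μ * diracGamma ν - diracGamma ν * diracGamma μ)

/-- Minkowski metric η = diag(1,−1,−1,−1). -/
def minkEta (μ ν : Fin 4) : ℂ :=
  if μ = ν then (if μ = 0 then 1 else -1) else 0

/-- Polarization current j_pol^μ := (ℏ/(2m)) ∑_ν ∂_ν(Ψ̄ σ^{μν} Ψ). -/
def jPolar (ℏ m : ℝ) (Ψ : (Fin 4 → ℝ) → (Fin 4 → ℂ)) (μ : Fin 4)
    (x : Fin 4 → ℝ) : ℂ :=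
  ((ℏ : ℂ) / (2 * m)) *
    ∑ ν : Fin 4, pd ν (fun y => diracAdjoint Ψ y ⬝ᵥ (diracSigma μ ν).mulVec (Ψ y)) x

/-- Convection current j_con^μ := (ℏ/(2mi)) ((∂^μΨ̄)Ψ − Ψ̄(∂^μΨ)),
with ∂^μ := η^{μμ}∂_μ (no summation). -/
def jCon (ℏ m : ℝ) (Ψ : (Fin 4 → ℝ) → (Fin 4 → ℂ)) (μ : Fin 4)
    (x : Fin 4 → ℝ) : ℂ :=
  ((ℏ : ℂ) / (2 * m * Complex.I)) * (minkEta μ μ *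
    (pd μ (diracAdjoint Ψ) x ⬝ᵥ Ψ x - diracAdjoint Ψ x ⬝ᵥ pd μ Ψ x))

/-!
Write `∂̸Ψ = ∑ γ^μ ∂_μΨ`. The Clifford relation turns `σ^{μν}` into `i γ^μ γ^ν - i η^{μν}` and into
`i η^{μν} - i γ^ν γ^μ`. Using the first form where the derivative in `∂_ν(Ψ̄ σ^{μν} Ψ)` falls on `Ψ`
and the second where it falls on `Ψ̄` gives, for every differentiable `Ψ`,

  `∑_ν ∂_ν(Ψ̄ σ^{μν} Ψ) = i (Ψ̄ γ^μ ∂̸Ψ - (∂̸Ψ)‾ γ^μ Ψ) + i η^{μμ} ((∂_μΨ̄)Ψ - Ψ̄(∂_μΨ))`.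

For a solution of the Dirac equation, `∂̸Ψ = -i(m/ℏ)Ψ`, the first term is `(2m/ℏ) Ψ̄ γ^μ Ψ`, and
this is the decomposition. The polarization current is conserved because it is the divergence of an
antisymmetric tensor, the Dirac current because `∑_μ ∂_μ(Ψ̄ γ^μ Ψ) = (∂̸Ψ)‾ Ψ + Ψ̄ ∂̸Ψ`, and the
convection current is their difference.
-/

section PartialDerivatives

variable {E F G : Type*} [NormedAddCommGroup E] [NormedSpace ℝ E] [NormedAddCommGroup F]
  [NormedSpace ℝ F] [NormedAddCommGroup G] [NormedSpace ℝ G]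
  {f g : (Fin 4 → ℝ) → E} {x : Fin 4 → ℝ}

lemma pd_neg (μ : Fin 4) : pd μ (-f) = -pd μ f := by
  ext1 x
  simp only [pd, fderiv_neg, _root_.neg_apply, Pi.neg_apply]

lemma pd_sub (μ : Fin 4) (hf : DifferentiableAt ℝ f x) (hg : DifferentiableAt ℝ g x) :
    pd μ (fun y => f y - g y) x = pd μ f x - pd μ g x := by
  simp only [pd, fderiv_fun_sub hf hg, _root_.sub_apply]

lemma pd_sum {ι : Type*} {s : Finset ι} {f : ι → (Fin 4 → ℝ) → E} (μ : Fin 4)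
    (hf : ∀ i ∈ s, DifferentiableAt ℝ (f i) x) :
    pd μ (fun y => ∑ i ∈ s, f i y) x = ∑ i ∈ s, pd μ (f i) x := by
  simp only [pd, fderiv_fun_sum hf, _root_.sum_apply]

lemma pd_const_mul {A : Type*} [NormedRing A] [NormedAlgebra ℝ A] {f : (Fin 4 → ℝ) → A}
    (μ : Fin 4) (hf : DifferentiableAt ℝ f x) (c : A) :
    pd μ (fun y => c * f y) x = c * pd μ f x := by
  simp only [pd, fderiv_const_mul hf, _root_.smul_apply, smul_eq_mul]

lemma pd_clm_comp (L : E →L[ℝ] F) (μ : Fin 4) (hf : DifferentiableAt ℝ f x) :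
    pd μ (fun y => L (f y)) x = L (pd μ f x) := by
  rw [pd, fderiv_fun_comp x L.differentiableAt hf, L.fderiv]
  rfl

lemma pd_of_bilinear (B : E →L[ℝ] F →L[ℝ] G) {g : (Fin 4 → ℝ) → F} (μ : Fin 4)
    (hf : DifferentiableAt ℝ f x) (hg : DifferentiableAt ℝ g x) :
    pd μ (fun y => B (f y) (g y)) x = B (pd μ f x) (g x) + B (f x) (pd μ g x) := by
  rw [pd, B.fderiv_of_bilinear hf hg, add_comm]
  rfl

lemma contDiff_pd {n : WithTop ℕ∞} (μ : Fin 4) (hf : ContDiff ℝ (n + 1) f) :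
    ContDiff ℝ n (pd μ f) :=
  (hf.fderiv_right le_rfl).clm_apply contDiff_const

lemma differentiable_pd (μ : Fin 4) (hf : ContDiff ℝ 2 f) : Differentiable ℝ (pd μ f) :=
  (contDiff_pd (n := 1) μ (by simpa [one_add_one_eq_two] using hf)).differentiable one_ne_zero

lemma pd_comm (μ ν : Fin 4) (hf : ContDiff ℝ 2 f) : pd μ (pd ν f) = pd ν (pd μ f) := by
  have hf' : Differentiable ℝ (fderiv ℝ f) :=
    (hf.fderiv_right (m := 1) (by norm_num)).differentiable one_ne_zero
  ext1 x
  have pd_pd (α β : Fin 4) :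
      pd α (pd β f) x = fderiv ℝ (fderiv ℝ f) x (Pi.single α 1) (Pi.single β 1) :=
    pd_clm_comp (ContinuousLinearMap.apply ℝ E (Pi.single β 1)) α (hf' x)
  rw [pd_pd, pd_pd]
  exact hf.contDiffAt.isSymmSndFDerivAt (by simp) _ _

lemma sum_pd_sum_pd_eq_zero_of_antisymm {T : Fin 4 → Fin 4 → (Fin 4 → ℝ) → E}
    (hT : ∀ μ ν, ContDiff ℝ 2 (T μ ν)) (anti : ∀ μ ν, T μ ν = -T ν μ) (x : Fin 4 → ℝ) :
    ∑ μ, pd μ (fun y => ∑ ν, pd ν (T μ ν) y) x = 0 := by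
  have : IsAddTorsionFree E := .of_isTorsionFree ℝ E
  have pd_pd_anti (μ ν : Fin 4) : pd μ (pd ν (T μ ν)) x = -pd ν (pd μ (T ν μ)) x := by
    rw [pd_comm μ ν (hT μ ν), anti, pd_neg, pd_neg, Pi.neg_apply]
  have sum_eq_neg : ∑ μ, ∑ ν, pd μ (pd ν (T μ ν)) x = -∑ μ, ∑ ν, pd μ (pd ν (T μ ν)) x := by
    conv_lhs => rw [Finset.sum_comm]
    simp only [← Finset.sum_neg_distrib, ← pd_pd_anti]
  calc ∑ μ, pd μ (fun y => ∑ ν, pd ν (T μ ν) y) x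
      = ∑ μ, ∑ ν, pd μ (pd ν (T μ ν)) x :=
        Finset.sum_congr rfl fun μ _ => pd_sum μ fun ν _ => differentiable_pd ν (hT μ ν) x
    _ = 0 := self_eq_neg.mp sum_eq_neg

end PartialDerivatives

section GammaMatrices

lemma diracGamma_anticomm (μ ν : Fin 4) :
    diracGamma μ * diracGamma ν + diracGamma ν * diracGamma μ = (2 * minkEta μ ν) • 1 := by
  have one_eq : (1 : Matrix (Fin 4) (Fin 4) ℂ) =
      !![1, 0, 0, 0; 0, 1, 0, 0; 0, 0, 1, 0; 0, 0, 0, 1] := by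
    simp [← Matrix.ext_iff, Fin.forall_fin_succ]
  fin_cases μ <;> fin_cases ν <;>
    norm_num [diracGamma, minkEta, one_eq, ← Matrix.ext_iff, Fin.forall_fin_succ]

lemma diracGamma_conjTranspose_mul_diracGamma_zero (μ : Fin 4) :
    (diracGamma μ)ᴴ * diracGamma 0 = diracGamma 0 * diracGamma μ := by
  fin_cases μ <;>
    simp [diracGamma, ← Matrix.ext_iff, Fin.forall_fin_succ, Matrix.mul_apply, Fin.sum_univ_four]

lemma diracSigma_antisymm (μ ν : Fin 4) : diracSigma μ ν = -diracSigma ν μ := by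
  unfold diracSigma
  module

lemma diracSigma_eq_mul_sub_minkEta (μ ν : Fin 4) :
    diracSigma μ ν =
      Complex.I • (diracGamma μ * diracGamma ν) - (Complex.I * minkEta μ ν) • 1 := by
  rw [diracSigma, eq_sub_of_add_eq' (diracGamma_anticomm μ ν)]
  module

lemma diracSigma_eq_minkEta_sub_mul (μ ν : Fin 4) :
    diracSigma μ ν =
      (Complex.I * minkEta μ ν) • 1 - Complex.I • (diracGamma ν * diracGamma μ) := by
  rw [diracSigma, eq_sub_of_add_eq (diracGamma_anticomm μ ν)]
  module

lemma sum_minkEta_mul (a : Fin 4 → ℂ) (μ : Fin 4) :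
    ∑ ν, minkEta μ ν * a ν = minkEta μ μ * a μ := by
  simp [minkEta]

end GammaMatrices

section DiracSpinors

/-- The Dirac adjoint `ψ ↦ ψ†γ⁰` of a single spinor; it is antilinear over `ℂ`, hence bundled as a
continuous `ℝ`-linear map. -/
def spinorAdjoint : (Fin 4 → ℂ) →L[ℝ] (Fin 4 → ℂ) :=
  (Matrix.vecMulBilin ℝ ℝ |>.flip (diracGamma 0)).toContinuousLinearMap ∘L
    (starL' ℝ : (Fin 4 → ℂ) ≃L[ℝ] (Fin 4 → ℂ))

/-- The sandwich `(φ, ψ) ↦ φ M ψ` of a matrix between a row and a column vector, bundled as a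
continuous bilinear map over `ℝ`, the field over which spinor fields are differentiated. -/
def sandwich {ι κ : Type*} [Fintype ι] [Fintype κ] (M : Matrix ι κ ℂ) :
    (ι → ℂ) →L[ℝ] (κ → ℂ) →L[ℝ] ℂ :=
  ((dotProductBilin ℝ ℝ).compl₂ (Matrix.mulVecBilin ℝ ℝ M)).toContinuousBilinearMap

/-- The bilinear covariant `Ψ̄ M Ψ` of a spinor field; `M = γ^μ` gives the Dirac current. -/
def bilinearCovariant (M : Matrix (Fin 4) (Fin 4) ℂ) (Ψ : (Fin 4 → ℝ) → (Fin 4 → ℂ))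
    (x : Fin 4 → ℝ) : ℂ :=
  diracAdjoint Ψ x ⬝ᵥ M *ᵥ Ψ x

/-- The Dirac operator `∂̸Ψ = ∑ γ^μ ∂_μΨ`. -/
def diracOperator (Ψ : (Fin 4 → ℝ) → (Fin 4 → ℂ)) (x : Fin 4 → ℝ) : Fin 4 → ℂ :=
  ∑ μ, diracGamma μ *ᵥ pd μ Ψ x

variable {Ψ : (Fin 4 → ℝ) → (Fin 4 → ℂ)} {x : Fin 4 → ℝ}

lemma contDiff_diracAdjoint {n : WithTop ℕ∞} (hΨ : ContDiff ℝ n Ψ) :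
    ContDiff ℝ n (diracAdjoint Ψ) :=
  spinorAdjoint.contDiff.comp hΨ

lemma differentiableAt_diracAdjoint (hΨ : DifferentiableAt ℝ Ψ x) :
    DifferentiableAt ℝ (diracAdjoint Ψ) x :=
  spinorAdjoint.differentiableAt.comp x hΨ

lemma pd_diracAdjoint (μ : Fin 4) (hΨ : DifferentiableAt ℝ Ψ x) :
    pd μ (diracAdjoint Ψ) x = diracAdjoint (pd μ Ψ) x :=
  pd_clm_comp spinorAdjoint μ hΨ

lemma diracAdjoint_eq_smul {Φ : (Fin 4 → ℝ) → (Fin 4 → ℂ)} {c : ℂ} (h : Φ x = c • Ψ x) :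
    diracAdjoint Φ x = star c • diracAdjoint Ψ x := by
  change star (Φ x) ᵥ* diracGamma 0 = star c • star (Ψ x) ᵥ* diracGamma 0
  rw [h, star_smul, Matrix.smul_vecMul]

lemma sum_pd_diracAdjoint_vecMul_diracGamma (hΨ : DifferentiableAt ℝ Ψ x) :
    ∑ μ, pd μ (diracAdjoint Ψ) x ᵥ* diracGamma μ = diracAdjoint (diracOperator Ψ) x := by
  change _ = star (∑ μ, diracGamma μ *ᵥ pd μ Ψ x) ᵥ* diracGamma 0
  simp only [star_sum, Matrix.star_mulVec, Matrix.sum_vecMul, Matrix.vecMul_vecMul,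
    diracGamma_conjTranspose_mul_diracGamma_zero]
  refine Finset.sum_congr rfl fun μ _ => ?_
  rw [pd_diracAdjoint μ hΨ, ← Matrix.vecMul_vecMul]
  rfl

lemma contDiff_bilinearCovariant {n : WithTop ℕ∞} (M : Matrix (Fin 4) (Fin 4) ℂ)
    (hΨ : ContDiff ℝ n Ψ) : ContDiff ℝ n (bilinearCovariant M Ψ) :=
  ((sandwich M).contDiff.comp (contDiff_diracAdjoint hΨ)).clm_apply hΨ

lemma pd_bilinearCovariant (M : Matrix (Fin 4) (Fin 4) ℂ) (μ : Fin 4)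
    (hΨ : DifferentiableAt ℝ Ψ x) :
    pd μ (bilinearCovariant M Ψ) x =
      pd μ (diracAdjoint Ψ) x ⬝ᵥ M *ᵥ Ψ x + diracAdjoint Ψ x ⬝ᵥ M *ᵥ pd μ Ψ x :=
  pd_of_bilinear (sandwich M) μ (differentiableAt_diracAdjoint hΨ) hΨ

lemma bilinearCovariant_diracSigma_antisymm (μ ν : Fin 4) :
    bilinearCovariant (diracSigma μ ν) Ψ = -bilinearCovariant (diracSigma ν μ) Ψ := by
  ext1 x
  rw [Pi.neg_apply, bilinearCovariant, diracSigma_antisymm, Matrix.neg_mulVec, dotProduct_neg,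
    bilinearCovariant]

lemma sum_pd_bilinearCovariant_diracGamma (hΨ : DifferentiableAt ℝ Ψ x) :
    ∑ μ, pd μ (bilinearCovariant (diracGamma μ) Ψ) x =
      diracAdjoint (diracOperator Ψ) x ⬝ᵥ Ψ x + diracAdjoint Ψ x ⬝ᵥ diracOperator Ψ x := by
  rw [← sum_pd_diracAdjoint_vecMul_diracGamma hΨ]
  simp only [diracOperator, pd_bilinearCovariant _ _ hΨ, Finset.sum_add_distrib, sum_dotProduct,
    dotProduct_sum, Matrix.dotProduct_mulVec]

lemma pd_bilinearCovariant_diracSigma (μ ν : Fin 4) (hΨ : DifferentiableAt ℝ Ψ x) :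
    pd ν (bilinearCovariant (diracSigma μ ν) Ψ) x =
      Complex.I * (diracAdjoint Ψ x ⬝ᵥ diracGamma μ *ᵥ diracGamma ν *ᵥ pd ν Ψ x
        - (pd ν (diracAdjoint Ψ) x ᵥ* diracGamma ν) ⬝ᵥ diracGamma μ *ᵥ Ψ x)
      + Complex.I * (minkEta μ ν *
        (pd ν (diracAdjoint Ψ) x ⬝ᵥ Ψ x - diracAdjoint Ψ x ⬝ᵥ pd ν Ψ x)) := by
  rw [pd_bilinearCovariant _ _ hΨ]
  nth_rewrite 1 [diracSigma_eq_minkEta_sub_mul]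
  rw [diracSigma_eq_mul_sub_minkEta]
  simp only [Matrix.sub_mulVec, Matrix.smul_mulVec, Matrix.one_mulVec, dotProduct_sub,
    dotProduct_smul, smul_eq_mul, ← Matrix.mulVec_mulVec, ← Matrix.dotProduct_mulVec]
  ring

lemma sum_pd_bilinearCovariant_diracSigma (μ : Fin 4) (hΨ : DifferentiableAt ℝ Ψ x) :
    ∑ ν, pd ν (bilinearCovariant (diracSigma μ ν) Ψ) x =
      Complex.I * (diracAdjoint Ψ x ⬝ᵥ diracGamma μ *ᵥ diracOperator Ψ x
        - diracAdjoint (diracOperator Ψ) x ⬝ᵥ diracGamma μ *ᵥ Ψ x)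
      + Complex.I * (minkEta μ μ *
        (pd μ (diracAdjoint Ψ) x ⬝ᵥ Ψ x - diracAdjoint Ψ x ⬝ᵥ pd μ Ψ x)) := by
  rw [← sum_pd_diracAdjoint_vecMul_diracGamma hΨ]
  simp only [diracOperator, pd_bilinearCovariant_diracSigma _ _ hΨ, Finset.sum_add_distrib,
    ← Finset.mul_sum, Finset.sum_sub_distrib, sum_minkEta_mul, sum_dotProduct, dotProduct_sum,
    Matrix.mulVec_sum]

end DiracSpinors

section DiracEquation

variable {Ψ : (Fin 4 → ℝ) → (Fin 4 → ℂ)} {x : Fin 4 → ℝ} {ℏ m κ : ℝ}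

lemma diracOperator_eq_smul (hℏ : ℏ ≠ 0)
    (hDirac : (Complex.I * (ℏ : ℂ)) • diracOperator Ψ x = (m : ℂ) • Ψ x) :
    diracOperator Ψ x = (-(Complex.I * (m / ℏ : ℝ))) • Ψ x := by
  have hIℏ : Complex.I * (ℏ : ℂ) ≠ 0 :=
    mul_ne_zero Complex.I_ne_zero (Complex.ofReal_ne_zero.mpr hℏ)
  rw [← inv_smul_smul₀ hIℏ (diracOperator Ψ x), hDirac, smul_smul]
  congr 1
  rw [mul_inv, Complex.inv_I]
  push_cast
  ring

lemma diracAdjoint_diracOperator_eq_smul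
    (hDirac : diracOperator Ψ x = (-(Complex.I * (κ : ℂ))) • Ψ x) :
    diracAdjoint (diracOperator Ψ) x = (Complex.I * (κ : ℂ)) • diracAdjoint Ψ x := by
  rw [diracAdjoint_eq_smul hDirac]
  simp

lemma sum_pd_bilinearCovariant_diracGamma_eq_zero (hΨ : DifferentiableAt ℝ Ψ x)
    (hDirac : diracOperator Ψ x = (-(Complex.I * (κ : ℂ))) • Ψ x) :
    ∑ μ, pd μ (bilinearCovariant (diracGamma μ) Ψ) x = 0 := by
  rw [sum_pd_bilinearCovariant_diracGamma hΨ, diracAdjoint_diracOperator_eq_smul hDirac, hDirac,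
    smul_dotProduct, dotProduct_smul, neg_smul, add_neg_cancel]

lemma sum_pd_bilinearCovariant_diracSigma_of_dirac (μ : Fin 4) (hΨ : DifferentiableAt ℝ Ψ x)
    (hDirac : diracOperator Ψ x = (-(Complex.I * (κ : ℂ))) • Ψ x) :
    ∑ ν, pd ν (bilinearCovariant (diracSigma μ ν) Ψ) x =
      2 * κ * bilinearCovariant (diracGamma μ) Ψ x
      + Complex.I * (minkEta μ μ *
        (pd μ (diracAdjoint Ψ) x ⬝ᵥ Ψ x - diracAdjoint Ψ x ⬝ᵥ pd μ Ψ x)) := by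
  rw [sum_pd_bilinearCovariant_diracSigma μ hΨ, diracAdjoint_diracOperator_eq_smul hDirac, hDirac,
    Matrix.mulVec_smul, dotProduct_smul, smul_dotProduct, smul_eq_mul, smul_eq_mul,
    ← bilinearCovariant]
  linear_combination -2 * κ * bilinearCovariant (diracGamma μ) Ψ x * Complex.I_sq

lemma bilinearCovariant_diracGamma_eq_jPolar_add_jCon (hℏ : ℏ ≠ 0) (hm : m ≠ 0) (μ : Fin 4)
    (hΨ : DifferentiableAt ℝ Ψ x)
    (hDirac : diracOperator Ψ x = (-(Complex.I * (m / ℏ : ℝ))) • Ψ x) :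
    bilinearCovariant (diracGamma μ) Ψ x = jPolar ℏ m Ψ μ x + jCon ℏ m Ψ μ x := by
  have hℏ' : (ℏ : ℂ) ≠ 0 := Complex.ofReal_ne_zero.mpr hℏ
  have hm' : (m : ℂ) ≠ 0 := Complex.ofReal_ne_zero.mpr hm
  have hPolar : jPolar ℏ m Ψ μ x =
      ℏ / (2 * m) * ∑ ν, pd ν (bilinearCovariant (diracSigma μ ν) Ψ) x := rfl
  rw [hPolar, sum_pd_bilinearCovariant_diracSigma_of_dirac μ hΨ hDirac, jCon,
    ← div_div _ _ Complex.I, Complex.div_I]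
  push_cast
  field_simp
  ring

lemma differentiable_jPolar (ℏ m : ℝ) (μ : Fin 4) (hΨ : ContDiff ℝ 2 Ψ) :
    Differentiable ℝ (jPolar ℏ m Ψ μ) :=
  (Differentiable.fun_sum fun ν _ =>
    differentiable_pd ν (contDiff_bilinearCovariant (diracSigma μ ν) hΨ)).const_mul _

lemma sum_pd_jPolar_eq_zero (ℏ m : ℝ) (hΨ : ContDiff ℝ 2 Ψ) (x : Fin 4 → ℝ) :
    ∑ μ, pd μ (jPolar ℏ m Ψ μ) x = 0 := by
  have hσ (μ ν : Fin 4) : ContDiff ℝ 2 (bilinearCovariant (diracSigma μ ν) Ψ) :=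
    contDiff_bilinearCovariant _ hΨ
  have pd_jPolar (μ : Fin 4) : pd μ (jPolar ℏ m Ψ μ) x =
      ℏ / (2 * m) * pd μ (fun y => ∑ ν, pd ν (bilinearCovariant (diracSigma μ ν) Ψ) y) x :=
    pd_const_mul μ (DifferentiableAt.fun_sum fun ν _ => differentiable_pd ν (hσ μ ν) x) _
  simp only [pd_jPolar]
  rw [← Finset.mul_sum, sum_pd_sum_pd_eq_zero_of_antisymm hσ bilinearCovariant_diracSigma_antisymm,
    mul_zero]

end DiracEquation

/-- Gordon decomposition of the Dirac current in flat spacetime: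
the Dirac current decomposes into polarization and convection currents
which are separately conserved. -/
theorem gordon_decomposition
    (ℏ m : ℝ) (hℏ : 0 < ℏ) (hm : 0 < m)
    (Ψ : (Fin 4 → ℝ) → (Fin 4 → ℂ))
    (hΨ : ContDiff ℝ 2 Ψ)
    (hDirac : ∀ x, (Complex.I * (ℏ : ℂ)) •
        (∑ μ : Fin 4, (diracGamma μ).mulVec (pd μ Ψ x)) = (m : ℂ) • Ψ x) :
    (∀ x, ∀ μ : Fin 4,
        diracAdjoint Ψ x ⬝ᵥ (diracGamma μ).mulVec (Ψ x)
          = jPolar ℏ m Ψ μ x + jCon ℏ m Ψ μ x) ∧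
    (∀ x, ∑ μ : Fin 4, pd μ (jPolar ℏ m Ψ μ) x = 0) ∧
    (∀ x, ∑ μ : Fin 4, pd μ (jCon ℏ m Ψ μ) x = 0) := by
  have hΨ' : Differentiable ℝ Ψ := hΨ.differentiable two_ne_zero
  have hDirac' (x) := diracOperator_eq_smul hℏ.ne' (hDirac x)
  have decomp (x μ) : bilinearCovariant (diracGamma μ) Ψ x = jPolar ℏ m Ψ μ x + jCon ℏ m Ψ μ x :=
    bilinearCovariant_diracGamma_eq_jPolar_add_jCon hℏ.ne' hm.ne' μ (hΨ' x) (hDirac' x)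
  refine ⟨decomp, sum_pd_jPolar_eq_zero ℏ m hΨ, fun x => ?_⟩
  have jCon_eq (μ : Fin 4) :
      jCon ℏ m Ψ μ = fun y => bilinearCovariant (diracGamma μ) Ψ y - jPolar ℏ m Ψ μ y :=
    funext fun y => eq_sub_of_add_eq' (decomp y μ).symm
  have pd_jCon (μ : Fin 4) : pd μ (jCon ℏ m Ψ μ) x =
      pd μ (bilinearCovariant (diracGamma μ) Ψ) x - pd μ (jPolar ℏ m Ψ μ) x := by
    rw [jCon_eq]
    exact pd_sub μ ((contDiff_bilinearCovariant _ hΨ).differentiable two_ne_zero x)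
      (differentiable_jPolar ℏ m μ hΨ x)
  simp only [pd_jCon]
  rw [Finset.sum_sub_distrib, sum_pd_bilinearCovariant_diracGamma_eq_zero (hΨ' x) (hDirac' x),
    sum_pd_jPolar_eq_zero ℏ m hΨ x, sub_zero]
end
end

section
/- Let M > a ≥ 0 and E, Φ, κ ∈ ℝ, and let r, ϑ satisfy r > M + √(M²−a²), 0 < ϑ < π, R ≥ 0 and Θ ≥ 0. Define the Boyer–Lindquist velocity components ṫ := [((r²+a²)² − a²Δ sin²ϑ)E − 2MarΦ]/(ΣΔ), φ̇ := [2MarE + ((Δ − a²sin²ϑ)/sin²ϑ)Φ]/(ΣΔ), ṙ := √R/Σ, ϑ̇ := √Θ/Σ. Then this velocity has unit Kerr norm: g_{tt}ṫ² + 2g_{tφ}ṫφ̇ + g_{rr}ṙ² + g_{ϑϑ}ϑ̇² + g_{φφ}φ̇² = 1. -/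
noncomputable section

/-- Σ := r² + a²cos²ϑ. -/
def Sigk (a r ϑ : ℝ) : ℝ := r ^ 2 + a ^ 2 * Real.cos ϑ ^ 2

/-- Δ := r² − 2Mr + a². -/
def Delk (M a r : ℝ) : ℝ := r ^ 2 - 2 * M * r + a ^ 2

/-- 𝒫 := E(r²+a²) − aΦ. -/
def Pk (a E Φ r : ℝ) : ℝ := E * (r ^ 2 + a ^ 2) - a * Φ

/-- 𝒟 := aE sinϑ − Φ/sinϑ. -/
def Dk (a E Φ ϑ : ℝ) : ℝ := a * E * Real.sin ϑ - Φ / Real.sin ϑ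

/-- R := 𝒫² − Δ(κ+r²). -/
def Rk (M a E Φ κ r : ℝ) : ℝ := Pk a E Φ r ^ 2 - Delk M a r * (κ + r ^ 2)

/-- Θ := κ − a²cos²ϑ − 𝒟². -/
def Thk (a E Φ κ ϑ : ℝ) : ℝ := κ - a ^ 2 * Real.cos ϑ ^ 2 - Dk a E Φ ϑ ^ 2

/-- ϖ := (κ − a²cos²ϑ)/(r²+κ). -/
def piomk (a κ r ϑ : ℝ) : ℝ := (κ - a ^ 2 * Real.cos ϑ ^ 2) / (r ^ 2 + κ)

/-- ϱ := 𝒫² − Δ(κ − a²cos²ϑ). -/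
def vrhok (M a E Φ κ r ϑ : ℝ) : ℝ :=
  Pk a E Φ r ^ 2 - Delk M a r * (κ - a ^ 2 * Real.cos ϑ ^ 2)

/-- ρ := 𝒫² − ΔΘ. -/
def rhok (M a E Φ κ r ϑ : ℝ) : ℝ := Pk a E Φ r ^ 2 - Delk M a r * Thk a E Φ κ ϑ

/-- Minkowski inner product of frame-component 4-tuples:
⟨u,v⟩_η := u⁰v⁰ − u¹v¹ − u²v² − u³v³. -/
def minkInner (u v : Fin 4 → ℝ) : ℝ :=
  u 0 * v 0 - u 1 * v 1 - u 2 * v 2 - u 3 * v 3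

/-!
In Carter's coframe the `(t, φ)`-block of the Kerr metric is diagonal: it is
`Δ/Σ (dt - a sin²ϑ dφ)² - sin²ϑ/Σ ((r² + a²) dφ - a dt)²`. The two 1-forms take the values `𝒫/Δ`
and `-𝒟/sin ϑ` on the velocity, so its norm is `(𝒫² - R - Δ(𝒟² + Θ))/(ΔΣ)`. The Carter constant
cancels between `R` and `Θ`, and what remains of the numerator is `ΔΣ`.
-/

section Kerr

open Real

lemma mul_sqrt_div_sq {x y : ℝ} (hx : x ≠ 0) (hy : 0 ≤ y) : (x * (√y / x)) ^ 2 = y := by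
  rw [mul_div_cancel₀ _ hx, sq_sqrt hy]

/-- The Kerr metric in Boyer–Lindquist coordinates, signature `(+,-,-,-)`, as a quadratic form
evaluated at the tangent vector with components `(vt, vr, vϑ, vφ)` over a point with coordinates
`r`, `ϑ`. -/
def kerrQuadraticForm (M a r ϑ vt vr vϑ vφ : ℝ) : ℝ :=
  (Delk M a r - a ^ 2 * sin ϑ ^ 2) / Sigk a r ϑ * vt ^ 2
    + 2 * (2 * M * a * r * sin ϑ ^ 2 / Sigk a r ϑ) * vt * vφ
    + -(Sigk a r ϑ) / Delk M a r * vr ^ 2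
    + -(Sigk a r ϑ) * vϑ ^ 2
    + -(sin ϑ ^ 2 * ((r ^ 2 + a ^ 2) ^ 2 - a ^ 2 * Delk M a r * sin ϑ ^ 2) / Sigk a r ϑ) * vφ ^ 2

/-- The component `ṫ` of the velocity with energy `E` and angular momentum `Φ`. -/
def kerrTimeVelocity (M a E Φ r ϑ : ℝ) : ℝ :=
  (((r ^ 2 + a ^ 2) ^ 2 - a ^ 2 * Delk M a r * sin ϑ ^ 2) * E - 2 * M * a * r * Φ)
    / (Sigk a r ϑ * Delk M a r)

/-- The component `φ̇` of the velocity with energy `E` and angular momentum `Φ`. -/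
def kerrAzimuthalVelocity (M a E Φ r ϑ : ℝ) : ℝ :=
  (2 * M * a * r * E + (Delk M a r - a ^ 2 * sin ϑ ^ 2) / sin ϑ ^ 2 * Φ)
    / (Sigk a r ϑ * Delk M a r)

variable {M a E Φ κ r ϑ : ℝ}

lemma sigk_pos (hr : r ≠ 0) : 0 < Sigk a r ϑ := by
  unfold Sigk
  positivity

lemma sigk_eq_sub_sin_sq (a r ϑ : ℝ) : Sigk a r ϑ = r ^ 2 + a ^ 2 - a ^ 2 * sin ϑ ^ 2 := by
  rw [Sigk, cos_sq']
  ring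

lemma delk_eq_sub_sq (M a r : ℝ) : Delk M a r = (r - M) ^ 2 - (M ^ 2 - a ^ 2) := by
  rw [Delk]
  ring

lemma delk_pos_of_add_sqrt_lt (hr : M + √(M ^ 2 - a ^ 2) < r) : 0 < Delk M a r := by
  rw [delk_eq_sub_sq, sub_pos]
  exact lt_sq_of_sqrt_lt (lt_sub_iff_add_lt'.mpr hr)

lemma two_mul_mul_mul_eq_mul_sub_delk (M a r : ℝ) :
    2 * M * a * r = a * (r ^ 2 + a ^ 2 - Delk M a r) := by
  rw [Delk]
  ring

lemma kerrQuadraticForm_eq_carter (M a r ϑ vt vr vϑ vφ : ℝ) :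
    kerrQuadraticForm M a r ϑ vt vr vϑ vφ =
      Delk M a r / Sigk a r ϑ * (vt - a * sin ϑ ^ 2 * vφ) ^ 2
        - Sigk a r ϑ / Delk M a r * vr ^ 2
        - Sigk a r ϑ * vϑ ^ 2
        - sin ϑ ^ 2 / Sigk a r ϑ * ((r ^ 2 + a ^ 2) * vφ - a * vt) ^ 2 := by
  rw [kerrQuadraticForm, two_mul_mul_mul_eq_mul_sub_delk M a r]
  ring

lemma kerrTimeVelocity_sub_eq_pk_div
    (hSig : Sigk a r ϑ ≠ 0) (hDel : Delk M a r ≠ 0) (hsin : sin ϑ ≠ 0) :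
    kerrTimeVelocity M a E Φ r ϑ - a * sin ϑ ^ 2 * kerrAzimuthalVelocity M a E Φ r ϑ =
      Pk a E Φ r / Delk M a r := by
  rw [kerrTimeVelocity, kerrAzimuthalVelocity, two_mul_mul_mul_eq_mul_sub_delk M a r, Pk]
  field_simp
  rw [sigk_eq_sub_sin_sq]
  ring

lemma kerrAzimuthalVelocity_sub_eq_neg_dk_div
    (hSig : Sigk a r ϑ ≠ 0) (hDel : Delk M a r ≠ 0) (hsin : sin ϑ ≠ 0) :
    (r ^ 2 + a ^ 2) * kerrAzimuthalVelocity M a E Φ r ϑ - a * kerrTimeVelocity M a E Φ r ϑ =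
      -Dk a E Φ ϑ / sin ϑ := by
  rw [kerrTimeVelocity, kerrAzimuthalVelocity, two_mul_mul_mul_eq_mul_sub_delk M a r, Dk]
  field_simp
  rw [sigk_eq_sub_sin_sq]
  ring

lemma pk_sq_sub_rk_sub_delk_mul (M a E Φ κ r ϑ : ℝ) :
    Pk a E Φ r ^ 2 - Rk M a E Φ κ r - Delk M a r * (Dk a E Φ ϑ ^ 2 + Thk a E Φ κ ϑ) =
      Delk M a r * Sigk a r ϑ := by
  rw [Rk, Thk, Sigk]
  ring

theorem kerr_velocity_unit_norm_general {vr vϑ : ℝ}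
    (hSig : Sigk a r ϑ ≠ 0) (hDel : Delk M a r ≠ 0) (hsin : sin ϑ ≠ 0)
    (hvr : (Sigk a r ϑ * vr) ^ 2 = Rk M a E Φ κ r)
    (hvϑ : (Sigk a r ϑ * vϑ) ^ 2 = Thk a E Φ κ ϑ) :
    kerrQuadraticForm M a r ϑ (kerrTimeVelocity M a E Φ r ϑ) vr vϑ
      (kerrAzimuthalVelocity M a E Φ r ϑ) = 1 := by
  rw [kerrQuadraticForm_eq_carter, kerrTimeVelocity_sub_eq_pk_div hSig hDel hsin,
    kerrAzimuthalVelocity_sub_eq_neg_dk_div hSig hDel hsin]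
  calc
    _ = (Pk a E Φ r ^ 2 - (Sigk a r ϑ * vr) ^ 2
          - Delk M a r * (Dk a E Φ ϑ ^ 2 + (Sigk a r ϑ * vϑ) ^ 2))
        / (Delk M a r * Sigk a r ϑ) := by
      field_simp
      ring
    _ = 1 := by
      rw [hvr, hvϑ, pk_sq_sub_rk_sub_delk_mul, div_self (mul_ne_zero hDel hSig)]

end Kerr

open Real in
/-- The Boyer–Lindquist velocity built from the Kerr first integrals has unit
Kerr norm. -/
theorem kerr_velocity_unit_norm
    (M a E Φ κ r ϑ : ℝ) (ha : 0 ≤ a) (haM : a < M)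
    (hr : M + Real.sqrt (M ^ 2 - a ^ 2) < r)
    (hϑ0 : 0 < ϑ) (hϑπ : ϑ < π)
    (hR : 0 ≤ Rk M a E Φ κ r) (hΘ : 0 ≤ Thk a E Φ κ ϑ) :
    (Delk M a r - a ^ 2 * sin ϑ ^ 2) / Sigk a r ϑ *
        ((((r ^ 2 + a ^ 2) ^ 2 - a ^ 2 * Delk M a r * sin ϑ ^ 2) * E
            - 2 * M * a * r * Φ) / (Sigk a r ϑ * Delk M a r)) ^ 2
      + 2 * (2 * M * a * r * sin ϑ ^ 2 / Sigk a r ϑ) *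
          ((((r ^ 2 + a ^ 2) ^ 2 - a ^ 2 * Delk M a r * sin ϑ ^ 2) * E
              - 2 * M * a * r * Φ) / (Sigk a r ϑ * Delk M a r)) *
          ((2 * M * a * r * E
              + (Delk M a r - a ^ 2 * sin ϑ ^ 2) / sin ϑ ^ 2 * Φ)
            / (Sigk a r ϑ * Delk M a r))
      + -(Sigk a r ϑ) / Delk M a r * (Real.sqrt (Rk M a E Φ κ r) / Sigk a r ϑ) ^ 2
      + -(Sigk a r ϑ) * (Real.sqrt (Thk a E Φ κ ϑ) / Sigk a r ϑ) ^ 2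
      + -(sin ϑ ^ 2 * ((r ^ 2 + a ^ 2) ^ 2
            - a ^ 2 * Delk M a r * sin ϑ ^ 2) / Sigk a r ϑ) *
          ((2 * M * a * r * E
              + (Delk M a r - a ^ 2 * sin ϑ ^ 2) / sin ϑ ^ 2 * Φ)
            / (Sigk a r ϑ * Delk M a r)) ^ 2
      = 1 := by
  have hr0 : 0 < r := (add_pos_of_pos_of_nonneg (ha.trans_lt haM) (sqrt_nonneg _)).trans hr
  have hSig : Sigk a r ϑ ≠ 0 := (sigk_pos hr0.ne').ne'
  exact kerr_velocity_unit_norm_general hSig (delk_pos_of_add_sqrt_lt hr).ne'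
    (sin_pos_of_pos_of_lt_pi hϑ0 hϑπ).ne' (mul_sqrt_div_sq hSig hR) (mul_sqrt_div_sq hSig hΘ)
end
end

section
/- Let M > a ≥ 0 and E, Φ, κ ∈ ℝ, and let r, ϑ be such that sin ϑ > 0, Δ > 0, Σ > 0, κ > a²cos²ϑ (so ϖ > 0 and κ > 0), R ≥ 0 and Θ ≥ 0. Define the 4-tuples of frame components U := Σ^{−1/2}(𝒫/√Δ, √R/√Δ, 𝒟, √Θ), L̃₁ := (κΣ)^{−1/2}(√ϖ·r√R/√Δ, √ϖ·r𝒫/√Δ, −(a cosϑ/√ϖ)√Θ, (a cosϑ/√ϖ)𝒟), L̃₂ := Σ^{−1/2}(√ϖ·𝒫/√Δ, √ϖ·√R/√Δ, 𝒟/√ϖ, √Θ/√ϖ), L₃ := (κΣ)^{−1/2}(a cosϑ√R/√Δ, a cosϑ·𝒫/√Δ, r√Θ, −r𝒟). Then (U, L̃₁, L̃₂, L₃) is an η-orthonormal tetrad: ⟨U,U⟩_η = 1, ⟨L̃₁,L̃₁⟩_η = ⟨L̃₂,L̃₂⟩_η = ⟨L₃,L₃⟩_η = −1, and all pairwise inner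 products among distinct members vanish. -/
noncomputable section

open Real

/-- Frame components of the 4-velocity U. -/
def Uframe (M a E Φ κ r ϑ : ℝ) : Fin 4 → ℝ :=
  (1 / Real.sqrt (Sigk a r ϑ)) •
    ![Pk a E Φ r / Real.sqrt (Delk M a r),
      Real.sqrt (Rk M a E Φ κ r) / Real.sqrt (Delk M a r),
      Dk a E Φ ϑ,
      Real.sqrt (Thk a E Φ κ ϑ)]

/-- Frame components of L̃₁. -/
def Lt1frame (M a E Φ κ r ϑ : ℝ) : Fin 4 → ℝ :=
  (1 / Real.sqrt (κ * Sigk a r ϑ)) •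
    ![Real.sqrt (piomk a κ r ϑ) * r * Real.sqrt (Rk M a E Φ κ r) /
        Real.sqrt (Delk M a r),
      Real.sqrt (piomk a κ r ϑ) * r * Pk a E Φ r / Real.sqrt (Delk M a r),
      -(a * Real.cos ϑ / Real.sqrt (piomk a κ r ϑ)) * Real.sqrt (Thk a E Φ κ ϑ),
      a * Real.cos ϑ / Real.sqrt (piomk a κ r ϑ) * Dk a E Φ ϑ]

/-- Frame components of L̃₂. -/
def Lt2frame (M a E Φ κ r ϑ : ℝ) : Fin 4 → ℝ :=
  (1 / Real.sqrt (Sigk a r ϑ)) •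
    ![Real.sqrt (piomk a κ r ϑ) * Pk a E Φ r / Real.sqrt (Delk M a r),
      Real.sqrt (piomk a κ r ϑ) * Real.sqrt (Rk M a E Φ κ r) /
        Real.sqrt (Delk M a r),
      Dk a E Φ ϑ / Real.sqrt (piomk a κ r ϑ),
      Real.sqrt (Thk a E Φ κ ϑ) / Real.sqrt (piomk a κ r ϑ)]

/-- Frame components of L₃. -/
def L3frame (M a E Φ κ r ϑ : ℝ) : Fin 4 → ℝ :=
  (1 / Real.sqrt (κ * Sigk a r ϑ)) •
    ![a * Real.cos ϑ * Real.sqrt (Rk M a E Φ κ r) / Real.sqrt (Delk M a r),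
      a * Real.cos ϑ * Pk a E Φ r / Real.sqrt (Delk M a r),
      r * Real.sqrt (Thk a E Φ κ ϑ),
      -(r * Dk a E Φ ϑ)]

/-!
Write `x = a cos ϑ`. Split the frame into the orthogonal planes `(e₀, e₁)` and `(e₂, e₃)`. By
definition of `R` and `Θ`, the parts of `u = √Σ U` in the two planes have Minkowski squares
`K = r² + κ` and `-N`, with `N = κ - x²`. Swapping the two components of `u` in the first plane and
rotating by a right angle in the second gives a vector `u*` orthogonal to `u` plane by plane. Each
leg of the tetrad is `u` or `u*` rescaled separately in each plane, so its inner products are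
combinations of `K` and `N`. The weights are right because `ϖ K = N`, `K - N = Σ` and
`x² K + r² N = κ Σ`.
-/

/-- An orthonormal frame of Minkowski space in signature `(+, -, -, -)`, timelike leg first. -/
def IsOrthonormalTetrad (e₀ e₁ e₂ e₃ : Fin 4 → ℝ) : Prop :=
  minkInner e₀ e₀ = 1 ∧ minkInner e₁ e₁ = -1 ∧ minkInner e₂ e₂ = -1 ∧ minkInner e₃ e₃ = -1 ∧
  minkInner e₀ e₁ = 0 ∧ minkInner e₀ e₂ = 0 ∧ minkInner e₀ e₃ = 0 ∧
  minkInner e₁ e₂ = 0 ∧ minkInner e₁ e₃ = 0 ∧ minkInner e₂ e₃ = 0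

/-- The vector `u` rescaled by `α` in the plane `(e₀, e₁)` and by `β` in the plane `(e₂, e₃)`. -/
def blockScale (α β : ℝ) (u : Fin 4 → ℝ) : Fin 4 → ℝ :=
  ![α * u 0, α * u 1, β * u 2, β * u 3]

/-- The vector `u*` orthogonal to `u` in each of the planes `(e₀, e₁)` and `(e₂, e₃)`. The
contraction of `u` with the Killing–Yano form of Kerr is, up to sign,
`blockScale (a cos ϑ) (-r) (blockDual u)`. -/
def blockDual (u : Fin 4 → ℝ) : Fin 4 → ℝ :=
  ![u 1, u 0, -u 3, u 2]

/-- The rescaled four-velocity `√Σ U` of a Kerr geodesic. -/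
def kerrVelocity (M a E Φ κ r ϑ : ℝ) : Fin 4 → ℝ :=
  ![Pk a E Φ r / √(Delk M a r), √(Rk M a E Φ κ r) / √(Delk M a r), Dk a E Φ ϑ, √(Thk a E Φ κ ϑ)]

theorem minkInner_comm (u v : Fin 4 → ℝ) : minkInner u v = minkInner v u := by
  simp only [minkInner]
  ring

theorem minkInner_smul_smul (c d : ℝ) (u v : Fin 4 → ℝ) :
    minkInner (c • u) (d • v) = c * d * minkInner u v := by
  simp only [minkInner, Pi.smul_apply, smul_eq_mul]
  ring

theorem minkInner_smul_smul_eq_zero {u v : Fin 4 → ℝ} (h : minkInner u v = 0) (c d : ℝ) :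
    minkInner (c • u) (d • v) = 0 := by
  rw [minkInner_smul_smul, h, mul_zero]

theorem minkInner_one_div_sqrt_smul_self {u : Fin 4 → ℝ} {ε σ : ℝ} (hσ : 0 < σ)
    (h : minkInner u u = ε * σ) : minkInner ((1 / √σ) • u) ((1 / √σ) • u) = ε := by
  rw [minkInner_smul_smul, h, div_mul_div_comm, Real.mul_self_sqrt hσ.le]
  field_simp

theorem blockScale_one_one (u : Fin 4 → ℝ) : blockScale 1 1 u = u := by
  ext i
  fin_cases i <;> exact one_mul _

theorem minkInner_blockScale_blockScale (α β α' β' : ℝ) (u : Fin 4 → ℝ) :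
    minkInner (blockScale α β u) (blockScale α' β' u) =
      α * α' * (u 0 ^ 2 - u 1 ^ 2) - β * β' * (u 2 ^ 2 + u 3 ^ 2) := by
  simp only [minkInner, blockScale, Matrix.cons_val]
  ring

theorem minkInner_self_blockScale (α β : ℝ) (u : Fin 4 → ℝ) :
    minkInner u (blockScale α β u) =
      α * (u 0 ^ 2 - u 1 ^ 2) - β * (u 2 ^ 2 + u 3 ^ 2) := by
  simpa only [blockScale_one_one, one_mul] using minkInner_blockScale_blockScale 1 1 α β u

theorem minkInner_self_eq_sub (u : Fin 4 → ℝ) :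
    minkInner u u = (u 0 ^ 2 - u 1 ^ 2) - (u 2 ^ 2 + u 3 ^ 2) := by
  simpa only [blockScale_one_one, one_mul] using minkInner_self_blockScale 1 1 u

theorem minkInner_blockScale_blockScale_blockDual (α β α' β' : ℝ) (u : Fin 4 → ℝ) :
    minkInner (blockScale α β u) (blockScale α' β' (blockDual u)) = 0 := by
  simp only [minkInner, blockScale, blockDual, Matrix.cons_val]
  ring

theorem minkInner_self_blockScale_blockDual (α β : ℝ) (u : Fin 4 → ℝ) :
    minkInner u (blockScale α β (blockDual u)) = 0 := by
  simpa only [blockScale_one_one] using minkInner_blockScale_blockScale_blockDual 1 1 α β u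

theorem minkInner_blockScale_blockDual_blockDual (α β α' β' : ℝ) (u : Fin 4 → ℝ) :
    minkInner (blockScale α β (blockDual u)) (blockScale α' β' (blockDual u)) =
      -(α * α' * (u 0 ^ 2 - u 1 ^ 2) + β * β' * (u 2 ^ 2 + u 3 ^ 2)) := by
  rw [minkInner_blockScale_blockScale]
  simp only [blockDual, Matrix.cons_val]
  ring

section Balanced

variable {u : Fin 4 → ℝ} {w : ℝ}

-- The weights `w, w⁻¹` exchange the Minkowski squares of the two parts of `u` up to sign.
theorem minkInner_blockScale_inv_self (hw : w ≠ 0)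
    (hbal : w ^ 2 * (u 0 ^ 2 - u 1 ^ 2) = u 2 ^ 2 + u 3 ^ 2) :
    minkInner (blockScale w w⁻¹ u) (blockScale w w⁻¹ u) = -minkInner u u := by
  rw [minkInner_blockScale_blockScale, minkInner_self_eq_sub, ← hbal]
  field_simp
  ring

theorem minkInner_self_blockScale_inv
    (hbal : w ^ 2 * (u 0 ^ 2 - u 1 ^ 2) = u 2 ^ 2 + u 3 ^ 2) :
    minkInner u (blockScale w w⁻¹ u) = 0 := by
  rw [minkInner_self_blockScale, ← hbal]
  field_simp
  ring

theorem minkInner_blockScale_mul_div_blockDual_self (hw : w ≠ 0)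
    (hbal : w ^ 2 * (u 0 ^ 2 - u 1 ^ 2) = u 2 ^ 2 + u 3 ^ 2) (r x : ℝ) :
    minkInner (blockScale (w * r) (x / w) (blockDual u))
        (blockScale (w * r) (x / w) (blockDual u)) =
      -(x ^ 2 * (u 0 ^ 2 - u 1 ^ 2) + r ^ 2 * (u 2 ^ 2 + u 3 ^ 2)) := by
  rw [minkInner_blockScale_blockDual_blockDual, ← hbal]
  field_simp
  ring

theorem minkInner_blockScale_mul_div_blockDual_blockScale_neg
    (hbal : w ^ 2 * (u 0 ^ 2 - u 1 ^ 2) = u 2 ^ 2 + u 3 ^ 2) (r x : ℝ) :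
    minkInner (blockScale (w * r) (x / w) (blockDual u)) (blockScale x (-r) (blockDual u)) = 0 := by
  rw [minkInner_blockScale_blockDual_blockDual, ← hbal]
  field_simp
  ring

end Balanced

theorem kerr_tetrad_orthonormal_general {u : Fin 4 → ℝ} {r x κ σ w : ℝ}
    (hradial : u 0 ^ 2 - u 1 ^ 2 = r ^ 2 + κ) (hpolar : u 2 ^ 2 + u 3 ^ 2 = κ - x ^ 2)
    (hσ : σ = r ^ 2 + x ^ 2) (hσ_pos : 0 < σ) (hκ : x ^ 2 < κ)
    (hw : w = √((κ - x ^ 2) / (r ^ 2 + κ))) :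
    IsOrthonormalTetrad ((1 / √σ) • u)
      ((1 / √(κ * σ)) • blockScale (w * r) (x / w) (blockDual u))
      ((1 / √σ) • blockScale w w⁻¹ u)
      ((1 / √(κ * σ)) • blockScale x (-r) (blockDual u)) := by
  have hκ_pos : 0 < κ := (sq_nonneg x).trans_lt hκ
  have hK : 0 < r ^ 2 + κ := by positivity
  have hϖ : 0 < (κ - x ^ 2) / (r ^ 2 + κ) := div_pos (sub_pos.2 hκ) hK
  have hw_ne : w ≠ 0 := hw ▸ (Real.sqrt_pos.2 hϖ).ne'
  have hbal : w ^ 2 * (u 0 ^ 2 - u 1 ^ 2) = u 2 ^ 2 + u 3 ^ 2 := by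
    rw [hw, Real.sq_sqrt hϖ.le, hradial, hpolar, div_mul_cancel₀ _ hK.ne']
  have hnorm : minkInner u u = σ := by
    rw [minkInner_self_eq_sub, hradial, hpolar, hσ]
    ring
  have hκσ : x ^ 2 * (u 0 ^ 2 - u 1 ^ 2) + r ^ 2 * (u 2 ^ 2 + u 3 ^ 2) = κ * σ := by
    rw [hradial, hpolar, hσ]
    ring
  refine ⟨minkInner_one_div_sqrt_smul_self hσ_pos ?_,
    minkInner_one_div_sqrt_smul_self (mul_pos hκ_pos hσ_pos) ?_,
    minkInner_one_div_sqrt_smul_self hσ_pos ?_,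
    minkInner_one_div_sqrt_smul_self (mul_pos hκ_pos hσ_pos) ?_, ?_, ?_, ?_, ?_, ?_, ?_⟩
  · rw [hnorm, one_mul]
  · rw [minkInner_blockScale_mul_div_blockDual_self hw_ne hbal, hκσ, neg_one_mul]
  · rw [minkInner_blockScale_inv_self hw_ne hbal, hnorm, neg_one_mul]
  · rw [minkInner_blockScale_blockDual_blockDual, neg_mul_neg, ← sq, ← sq, hκσ, neg_one_mul]
  all_goals apply minkInner_smul_smul_eq_zero
  · exact minkInner_self_blockScale_blockDual ..
  · exact minkInner_self_blockScale_inv hbal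
  · exact minkInner_self_blockScale_blockDual ..
  · rw [minkInner_comm, minkInner_blockScale_blockScale_blockDual]
  · exact minkInner_blockScale_mul_div_blockDual_blockScale_neg hbal r x
  · exact minkInner_blockScale_blockScale_blockDual ..

section Kerr

variable (M a E Φ κ r ϑ : ℝ)

theorem Uframe_eq_smul_kerrVelocity :
    Uframe M a E Φ κ r ϑ = (1 / √(Sigk a r ϑ)) • kerrVelocity M a E Φ κ r ϑ :=
  rfl

theorem Lt1frame_eq_blockScale_blockDual :
    Lt1frame M a E Φ κ r ϑ = (1 / √(κ * Sigk a r ϑ)) •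
      blockScale (√(piomk a κ r ϑ) * r) (a * cos ϑ / √(piomk a κ r ϑ))
        (blockDual (kerrVelocity M a E Φ κ r ϑ)) := by
  simp only [Lt1frame, blockScale, blockDual, kerrVelocity, Matrix.cons_val, mul_div_assoc,
    neg_mul, mul_neg]

theorem Lt2frame_eq_blockScale :
    Lt2frame M a E Φ κ r ϑ = (1 / √(Sigk a r ϑ)) •
      blockScale √(piomk a κ r ϑ) (√(piomk a κ r ϑ))⁻¹ (kerrVelocity M a E Φ κ r ϑ) := by
  simp only [Lt2frame, blockScale, kerrVelocity, Matrix.cons_val, mul_div_assoc,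
    div_eq_inv_mul _ √(piomk a κ r ϑ)]

theorem L3frame_eq_blockScale_blockDual :
    L3frame M a E Φ κ r ϑ = (1 / √(κ * Sigk a r ϑ)) •
      blockScale (a * cos ϑ) (-r) (blockDual (kerrVelocity M a E Φ κ r ϑ)) := by
  simp only [L3frame, blockScale, blockDual, kerrVelocity, Matrix.cons_val, mul_div_assoc,
    neg_mul, mul_neg, neg_neg]

variable {M a E Φ κ r ϑ}

theorem kerrVelocity_sq_sub_sq (hΔ : 0 < Delk M a r) (hR : 0 ≤ Rk M a E Φ κ r) :
    kerrVelocity M a E Φ κ r ϑ 0 ^ 2 - kerrVelocity M a E Φ κ r ϑ 1 ^ 2 = r ^ 2 + κ := by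
  simp only [kerrVelocity, Matrix.cons_val, div_pow, Real.sq_sqrt hΔ.le, Real.sq_sqrt hR]
  rw [Rk]
  field_simp
  ring

theorem kerrVelocity_sq_add_sq (hΘ : 0 ≤ Thk a E Φ κ ϑ) :
    kerrVelocity M a E Φ κ r ϑ 2 ^ 2 + kerrVelocity M a E Φ κ r ϑ 3 ^ 2 =
      κ - (a * cos ϑ) ^ 2 := by
  simp only [kerrVelocity, Matrix.cons_val, Real.sq_sqrt hΘ]
  rw [Thk]
  ring

end Kerr

/-- (U, L̃₁, L̃₂, L₃) is an η-orthonormal tetrad. -/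
theorem kerr_tetrad_orthonormal
    (M a E Φ κ r ϑ : ℝ) (ha : 0 ≤ a) (haM : a < M)
    (hsin : 0 < Real.sin ϑ) (hΔ : 0 < Delk M a r) (hSig : 0 < Sigk a r ϑ)
    (hκ : a ^ 2 * Real.cos ϑ ^ 2 < κ)
    (hR : 0 ≤ Rk M a E Φ κ r) (hΘ : 0 ≤ Thk a E Φ κ ϑ) :
    minkInner (Uframe M a E Φ κ r ϑ) (Uframe M a E Φ κ r ϑ) = 1 ∧
    minkInner (Lt1frame M a E Φ κ r ϑ) (Lt1frame M a E Φ κ r ϑ) = -1 ∧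
    minkInner (Lt2frame M a E Φ κ r ϑ) (Lt2frame M a E Φ κ r ϑ) = -1 ∧
    minkInner (L3frame M a E Φ κ r ϑ) (L3frame M a E Φ κ r ϑ) = -1 ∧
    minkInner (Uframe M a E Φ κ r ϑ) (Lt1frame M a E Φ κ r ϑ) = 0 ∧
    minkInner (Uframe M a E Φ κ r ϑ) (Lt2frame M a E Φ κ r ϑ) = 0 ∧
    minkInner (Uframe M a E Φ κ r ϑ) (L3frame M a E Φ κ r ϑ) = 0 ∧
    minkInner (Lt1frame M a E Φ κ r ϑ) (Lt2frame M a E Φ κ r ϑ) = 0 ∧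
    minkInner (Lt1frame M a E Φ κ r ϑ) (L3frame M a E Φ κ r ϑ) = 0 ∧
    minkInner (Lt2frame M a E Φ κ r ϑ) (L3frame M a E Φ κ r ϑ) = 0 := by
  rw [Uframe_eq_smul_kerrVelocity, Lt1frame_eq_blockScale_blockDual, Lt2frame_eq_blockScale,
    L3frame_eq_blockScale_blockDual]
  exact kerr_tetrad_orthonormal_general (kerrVelocity_sq_sub_sq hΔ hR)
    (kerrVelocity_sq_add_sq hΘ) (by rw [Sigk, mul_pow]) hSig (by rwa [mul_pow])
    (by rw [piomk, mul_pow])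
end
end

section
/- Let M > a ≥ 0, E, Φ, κ ∈ ℝ, and let r, ϑ satisfy sin ϑ ≠ 0, κ > 0, Σ > 0, R ≥ 0, Θ ≥ 0, ρ > 0, ϱ > 0, ϖ > 0 and κ + r² > 0. Set c₁ := (κ+r²)(rϖ√(RΘ) − a cosϑ·𝒟𝒫) and c₂ := (κ+r²)(a cosϑ·ϱ√Θ + rϖ·𝒟𝒫√R). For χ ∈ ℝ define the 3×3 real matrix Λ with rows: row 1 = ( (r𝒟𝒫 + a cosϑ√(RΘ))/√(κΣρ), −(√κ sinχ·Σ𝒫√Θ + c₁cosχ)/(√ϖ(κ+r²)√(κΣρ)), (√κ cosχ·Σ𝒫√Θ − c₁sinχ)/(√ϖ(κ+r²)√(κΣρ)) ); row 2 = ( (rϱ√Θ − a cosϑ·𝒟𝒫√R)/√(κΣϱρ), (√κ sinχ·Σ𝒟𝒫² + c₂cosχ)/(√ϖ(κ+r²)√(κΣϱρ)), (−√κ cosχ·Σ𝒟𝒫² + c₂sinχ)/(√ϖ(κ+r²)√(κΣϱρ)) ); row 3 = ( −a cosϑ·𝒫/√(κϱ), √ϖ(cosχ·r𝒫 − √κ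 sinχ·√R)/√(κϱ), √ϖ(sinχ·r𝒫 + √κ cosχ·√R)/√(κϱ) ). Then ΛᵀΛ = I₃ and det Λ = 1; i.e. Λ ∈ SO(3). -/
noncomputable section

/-- c₁ := (κ+r²)(rϖ√(RΘ) − a cosϑ·𝒟𝒫). -/
def c1k (M a E Φ κ r ϑ : ℝ) : ℝ :=
  (κ + r ^ 2) * (r * piomk a κ r ϑ *
      Real.sqrt (Rk M a E Φ κ r * Thk a E Φ κ ϑ)
    - a * Real.cos ϑ * Dk a E Φ ϑ * Pk a E Φ r)

/-- c₂ := (κ+r²)(a cosϑ·ϱ√Θ + rϖ·𝒟𝒫√R). -/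
def c2k (M a E Φ κ r ϑ : ℝ) : ℝ :=
  (κ + r ^ 2) * (a * Real.cos ϑ * vrhok M a E Φ κ r ϑ *
      Real.sqrt (Thk a E Φ κ ϑ)
    + r * piomk a κ r ϑ * Dk a E Φ ϑ * Pk a E Φ r *
        Real.sqrt (Rk M a E Φ κ r))

/-- The geometrically induced rotation matrix Λ relating the reference 3-frame
to the parallel-propagated 3-frame along a timelike Kerr geodesic. -/
def LambdaRot (M a E Φ κ r ϑ χ : ℝ) : Matrix (Fin 3) (Fin 3) ℝ :=
  !![(r * Dk a E Φ ϑ * Pk a E Φ r + a * Real.cos ϑ *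
        Real.sqrt (Rk M a E Φ κ r * Thk a E Φ κ ϑ)) /
      Real.sqrt (κ * Sigk a r ϑ * rhok M a E Φ κ r ϑ),
    -(Real.sqrt κ * Real.sin χ * Sigk a r ϑ * Pk a E Φ r *
          Real.sqrt (Thk a E Φ κ ϑ) + c1k M a E Φ κ r ϑ * Real.cos χ) /
      (Real.sqrt (piomk a κ r ϑ) * (κ + r ^ 2) *
        Real.sqrt (κ * Sigk a r ϑ * rhok M a E Φ κ r ϑ)),
    (Real.sqrt κ * Real.cos χ * Sigk a r ϑ * Pk a E Φ r *
          Real.sqrt (Thk a E Φ κ ϑ) - c1k M a E Φ κ r ϑ * Real.sin χ) /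
      (Real.sqrt (piomk a κ r ϑ) * (κ + r ^ 2) *
        Real.sqrt (κ * Sigk a r ϑ * rhok M a E Φ κ r ϑ));
    (r * vrhok M a E Φ κ r ϑ * Real.sqrt (Thk a E Φ κ ϑ)
        - a * Real.cos ϑ * Dk a E Φ ϑ * Pk a E Φ r *
            Real.sqrt (Rk M a E Φ κ r)) /
      Real.sqrt (κ * Sigk a r ϑ * vrhok M a E Φ κ r ϑ * rhok M a E Φ κ r ϑ),
    (Real.sqrt κ * Real.sin χ * Sigk a r ϑ * Dk a E Φ ϑ * Pk a E Φ r ^ 2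
        + c2k M a E Φ κ r ϑ * Real.cos χ) /
      (Real.sqrt (piomk a κ r ϑ) * (κ + r ^ 2) *
        Real.sqrt (κ * Sigk a r ϑ * vrhok M a E Φ κ r ϑ * rhok M a E Φ κ r ϑ)),
    (-(Real.sqrt κ * Real.cos χ * Sigk a r ϑ * Dk a E Φ ϑ * Pk a E Φ r ^ 2)
        + c2k M a E Φ κ r ϑ * Real.sin χ) /
      (Real.sqrt (piomk a κ r ϑ) * (κ + r ^ 2) *
        Real.sqrt (κ * Sigk a r ϑ * vrhok M a E Φ κ r ϑ * rhok M a E Φ κ r ϑ));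
    -(a * Real.cos ϑ * Pk a E Φ r) / Real.sqrt (κ * vrhok M a E Φ κ r ϑ),
    Real.sqrt (piomk a κ r ϑ) * (Real.cos χ * r * Pk a E Φ r
        - Real.sqrt κ * Real.sin χ * Real.sqrt (Rk M a E Φ κ r)) /
      Real.sqrt (κ * vrhok M a E Φ κ r ϑ),
    Real.sqrt (piomk a κ r ϑ) * (Real.sin χ * r * Pk a E Φ r
        + Real.sqrt κ * Real.cos χ * Real.sqrt (Rk M a E Φ κ r)) /
      Real.sqrt (κ * vrhok M a E Φ κ r ϑ)]

/-!
The matrix Λ is a product of four rotations about coordinate axes,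
`Λ = R_z(α) R_x(β) R_z(γ) R_x(-χ)`. The Marck angle enters only through the last factor, and at
`χ = 0` the third row and third column of Λ exhibit the Euler angles `α`, `β`, `γ`: each is the
direction of a planar vector whose squared length is computed by one of the algebraic identities

* `𝒟²𝒫² + ϱΘ = ϖ(κ + r²)ρ`,
* `ϖ(κ + r²)R + Σ𝒫² = (κ + r²)ϱ`,
* `(κ + r²)(ϖr² + a²cos²ϑ) = κΣ`.
-/

open Matrix

/-- The right-handed rotation of `ℝ³` by the angle `θ` about the first coordinate axis. -/
def rotX (θ : ℝ) : Matrix (Fin 3) (Fin 3) ℝ :=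
  !![1, 0, 0; 0, Real.cos θ, -Real.sin θ; 0, Real.sin θ, Real.cos θ]

/-- The right-handed rotation of `ℝ³` by the angle `θ` about the third coordinate axis. -/
def rotZ (θ : ℝ) : Matrix (Fin 3) (Fin 3) ℝ :=
  !![Real.cos θ, -Real.sin θ, 0; Real.sin θ, Real.cos θ, 0; 0, 0, 1]

theorem rotX_mem_specialOrthogonalGroup (θ : ℝ) :
    rotX θ ∈ specialOrthogonalGroup (Fin 3) ℝ := by
  rw [mem_specialOrthogonalGroup_iff, mem_orthogonalGroup_iff]
  constructor
  · ext i j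
    fin_cases i <;> fin_cases j <;>
      simp [rotX, Matrix.mul_apply, Fin.sum_univ_three, ← sq, mul_comm]
  · simp [rotX, det_fin_three, ← sq]

theorem rotZ_mem_specialOrthogonalGroup (θ : ℝ) :
    rotZ θ ∈ specialOrthogonalGroup (Fin 3) ℝ := by
  rw [mem_specialOrthogonalGroup_iff, mem_orthogonalGroup_iff]
  constructor
  · ext i j
    fin_cases i <;> fin_cases j <;>
      simp [rotZ, Matrix.mul_apply, Fin.sum_univ_three, ← sq, mul_comm]
  · simp [rotZ, det_fin_three, ← sq]

theorem rotZ_mul_rotX_mul_rotZ (α β γ : ℝ) :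
    rotZ α * rotX β * rotZ γ =
      !![Real.cos α * Real.cos γ - Real.sin α * Real.cos β * Real.sin γ,
        -(Real.cos α * Real.sin γ) - Real.sin α * Real.cos β * Real.cos γ,
        Real.sin α * Real.sin β;
        Real.sin α * Real.cos γ + Real.cos α * Real.cos β * Real.sin γ,
        -(Real.sin α * Real.sin γ) + Real.cos α * Real.cos β * Real.cos γ,
        -(Real.cos α * Real.sin β);
        Real.sin β * Real.sin γ, Real.sin β * Real.cos γ, Real.cos β] := by
  rw [rotZ, rotX, rotZ, mul_fin_three, mul_fin_three]
  ring_nf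

theorem mul_rotX_neg (A : Matrix (Fin 3) (Fin 3) ℝ) (χ : ℝ) :
    A * rotX (-χ) =
      Matrix.of fun i => ![A i 0, A i 1 * Real.cos χ - A i 2 * Real.sin χ,
        A i 1 * Real.sin χ + A i 2 * Real.cos χ] := by
  ext i j
  fin_cases j <;> simp [rotX, Matrix.mul_apply, Fin.sum_univ_three, sub_eq_add_neg]

theorem cos_arg_of_normSq_eq {z : ℂ} {n : ℝ} (hn : 0 < n) (hz : Complex.normSq z = n) :
    Real.cos z.arg = z.re / √n := by
  have hz0 : z ≠ 0 := Complex.normSq_pos.mp (hz ▸ hn)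
  rw [Complex.cos_arg hz0, Complex.norm_def, hz]

theorem sin_arg_of_normSq_eq {z : ℂ} {n : ℝ} (hz : Complex.normSq z = n) :
    Real.sin z.arg = z.im / √n := by
  rw [Complex.sin_arg, Complex.norm_def, hz]

section Kerr

variable (M a E Φ κ r ϑ : ℝ)

/-- The planar vector `(𝒟𝒫, √ϱ√Θ)`, encoded as a complex number so that its argument is the
precession Euler angle of Λ. -/
def precessionVec : ℂ :=
  ⟨Dk a E Φ ϑ * Pk a E Φ r, √(vrhok M a E Φ κ r ϑ) * √(Thk a E Φ κ ϑ)⟩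

/-- The planar vector `(√ϖ√(κ+r²)√R, √Σ𝒫)`, encoded as a complex number so that its argument is the
nutation Euler angle of Λ. -/
def nutationVec : ℂ :=
  ⟨√(piomk a κ r ϑ) * √(κ + r ^ 2) * √(Rk M a E Φ κ r), √(Sigk a r ϑ) * Pk a E Φ r⟩

/-- The planar vector `√(κ+r²)(√ϖ r, -a cos ϑ)`, encoded as a complex number so that its argument is
the Euler angle of intrinsic rotation of Λ. -/
def intrinsicVec : ℂ :=
  ⟨√(κ + r ^ 2) * (√(piomk a κ r ϑ) * r), -(√(κ + r ^ 2) * (a * Real.cos ϑ))⟩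

variable {M a E Φ κ r ϑ}

theorem piomk_mul_add_sq (hκr : κ + r ^ 2 ≠ 0) :
    piomk a κ r ϑ * (κ + r ^ 2) = κ - a ^ 2 * Real.cos ϑ ^ 2 := by
  rw [piomk, add_comm (r ^ 2), div_mul_cancel₀ _ hκr]

theorem normSq_precessionVec (hκr : κ + r ^ 2 ≠ 0) (hϱ : 0 ≤ vrhok M a E Φ κ r ϑ)
    (hΘ : 0 ≤ Thk a E Φ κ ϑ) :
    Complex.normSq (precessionVec M a E Φ κ r ϑ) =
      piomk a κ r ϑ * (κ + r ^ 2) * rhok M a E Φ κ r ϑ := by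
  calc Complex.normSq (precessionVec M a E Φ κ r ϑ)
      = Dk a E Φ ϑ ^ 2 * Pk a E Φ r ^ 2 +
          √(vrhok M a E Φ κ r ϑ) ^ 2 * √(Thk a E Φ κ ϑ) ^ 2 := by
        rw [precessionVec, Complex.normSq_mk]; ring
    _ = Dk a E Φ ϑ ^ 2 * Pk a E Φ r ^ 2 + vrhok M a E Φ κ r ϑ * Thk a E Φ κ ϑ := by
        rw [Real.sq_sqrt hϱ, Real.sq_sqrt hΘ]
    _ = piomk a κ r ϑ * (κ + r ^ 2) * rhok M a E Φ κ r ϑ := by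
        rw [piomk_mul_add_sq hκr, rhok, vrhok, Thk]; ring

theorem normSq_nutationVec (hκr : 0 < κ + r ^ 2) (hϖ : 0 ≤ piomk a κ r ϑ)
    (hR : 0 ≤ Rk M a E Φ κ r) (hSig : 0 ≤ Sigk a r ϑ) :
    Complex.normSq (nutationVec M a E Φ κ r ϑ) = (κ + r ^ 2) * vrhok M a E Φ κ r ϑ := by
  calc Complex.normSq (nutationVec M a E Φ κ r ϑ)
      = √(piomk a κ r ϑ) ^ 2 * √(κ + r ^ 2) ^ 2 * √(Rk M a E Φ κ r) ^ 2 +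
          √(Sigk a r ϑ) ^ 2 * Pk a E Φ r ^ 2 := by
        rw [nutationVec, Complex.normSq_mk]; ring
    _ = piomk a κ r ϑ * (κ + r ^ 2) * Rk M a E Φ κ r + Sigk a r ϑ * Pk a E Φ r ^ 2 := by
        rw [Real.sq_sqrt hϖ, Real.sq_sqrt hκr.le, Real.sq_sqrt hR, Real.sq_sqrt hSig]
    _ = (κ + r ^ 2) * vrhok M a E Φ κ r ϑ := by
        rw [piomk_mul_add_sq hκr.ne', Rk, Sigk, vrhok]; ring

theorem normSq_intrinsicVec (hκr : 0 < κ + r ^ 2) (hϖ : 0 ≤ piomk a κ r ϑ) :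
    Complex.normSq (intrinsicVec a κ r ϑ) = κ * Sigk a r ϑ := by
  calc Complex.normSq (intrinsicVec a κ r ϑ)
      = √(piomk a κ r ϑ) ^ 2 * √(κ + r ^ 2) ^ 2 * r ^ 2 +
          √(κ + r ^ 2) ^ 2 * (a ^ 2 * Real.cos ϑ ^ 2) := by
        rw [intrinsicVec, Complex.normSq_mk]; ring
    _ = piomk a κ r ϑ * (κ + r ^ 2) * r ^ 2 + (κ + r ^ 2) * (a ^ 2 * Real.cos ϑ ^ 2) := by
        rw [Real.sq_sqrt hϖ, Real.sq_sqrt hκr.le]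
    _ = κ * Sigk a r ϑ := by
        rw [piomk_mul_add_sq hκr.ne', Sigk]; ring

theorem LambdaRot_eq_rotZ_mul_rotX_mul_rotZ_mul_rotX (χ : ℝ) (hκ : 0 < κ) (hSig : 0 < Sigk a r ϑ)
    (hR : 0 ≤ Rk M a E Φ κ r) (hΘ : 0 ≤ Thk a E Φ κ ϑ)
    (hρ : 0 < rhok M a E Φ κ r ϑ) (hϱ : 0 < vrhok M a E Φ κ r ϑ) (hϖ : 0 < piomk a κ r ϑ) :
    LambdaRot M a E Φ κ r ϑ χ =
      rotZ (precessionVec M a E Φ κ r ϑ).arg * rotX (nutationVec M a E Φ κ r ϑ).arg *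
        rotZ (intrinsicVec a κ r ϑ).arg * rotX (-χ) := by
  have hκr : 0 < κ + r ^ 2 := by positivity
  have hα := normSq_precessionVec hκr.ne' hϱ.le hΘ
  have hβ := normSq_nutationVec hκr hϖ.le hR hSig.le
  have hγ := normSq_intrinsicVec hκr hϖ.le
  rw [rotZ_mul_rotX_mul_rotZ, mul_rotX_neg, LambdaRot, c1k, c2k,
    cos_arg_of_normSq_eq (by positivity) hα, sin_arg_of_normSq_eq hα,
    cos_arg_of_normSq_eq (by positivity) hβ, sin_arg_of_normSq_eq hβ,
    cos_arg_of_normSq_eq (by positivity) hγ, sin_arg_of_normSq_eq hγ]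
  simp only [precessionVec, nutationVec, intrinsicVec, Real.sqrt_mul hκ.le, Real.sqrt_mul hκr.le,
    Real.sqrt_mul hR, Real.sqrt_mul (mul_pos hκ hSig).le, Real.sqrt_mul hϖ.le,
    Real.sqrt_mul (mul_pos hϖ hκr).le, Real.sqrt_mul (mul_pos (mul_pos hκ hSig) hϱ).le]
  have sq_sqrt_ϖ := Real.sq_sqrt hϖ.le
  have sq_sqrt_κr := Real.sq_sqrt hκr.le
  have sq_sqrt_Sig := Real.sq_sqrt hSig.le
  have sq_sqrt_ϱ := Real.sq_sqrt hϱ.le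
  ext i j
  fin_cases i <;> fin_cases j <;>
    simp only [Fin.zero_eta, Fin.mk_one, Fin.reduceFinMk, of_apply, cons_val', cons_val_zero,
      cons_val_one, cons_val_fin_one, cons_val] <;>
    field_simp
  all_goals try simp only [sq_sqrt_ϖ, sq_sqrt_κr, sq_sqrt_Sig, sq_sqrt_ϱ]
  all_goals ring

end Kerr

theorem LambdaRot_mem_SO3_general
    (M a E Φ κ r ϑ χ : ℝ) (hsin : Real.sin ϑ ≠ 0) (hκ : 0 < κ) (hSig : 0 < Sigk a r ϑ)
    (hR : 0 ≤ Rk M a E Φ κ r) (hΘ : 0 ≤ Thk a E Φ κ ϑ)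
    (hρ : 0 < rhok M a E Φ κ r ϑ) (hϱ : 0 < vrhok M a E Φ κ r ϑ)
    (hϖ : 0 < piomk a κ r ϑ) :
    LambdaRot M a E Φ κ r ϑ χ ∈ specialOrthogonalGroup (Fin 3) ℝ := by
  rw [LambdaRot_eq_rotZ_mul_rotX_mul_rotZ_mul_rotX χ hκ hSig hR hΘ hρ hϱ hϖ]
  exact mul_mem (mul_mem (mul_mem (rotZ_mem_specialOrthogonalGroup _)
    (rotX_mem_specialOrthogonalGroup _)) (rotZ_mem_specialOrthogonalGroup _))
    (rotX_mem_specialOrthogonalGroup _)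

/-- Λ is a rotation: ΛᵀΛ = I₃ and det Λ = 1, i.e. Λ ∈ SO(3). -/
theorem LambdaRot_mem_SO3
    (M a E Φ κ r ϑ χ : ℝ) (ha : 0 ≤ a) (haM : a < M)
    (hsin : Real.sin ϑ ≠ 0) (hκ : 0 < κ) (hSig : 0 < Sigk a r ϑ)
    (hR : 0 ≤ Rk M a E Φ κ r) (hΘ : 0 ≤ Thk a E Φ κ ϑ)
    (hρ : 0 < rhok M a E Φ κ r ϑ) (hϱ : 0 < vrhok M a E Φ κ r ϑ)
    (hϖ : 0 < piomk a κ r ϑ) (hκr : 0 < κ + r ^ 2) :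
    (LambdaRot M a E Φ κ r ϑ χ).transpose * LambdaRot M a E Φ κ r ϑ χ = 1 ∧
    (LambdaRot M a E Φ κ r ϑ χ).det = 1 := by
  have hΛ := LambdaRot_mem_SO3_general M a E Φ κ r ϑ χ hsin hκ hSig hR hΘ hρ hϱ hϖ
  exact ⟨(mem_orthogonalGroup_iff' _ _).mp hΛ.1, hΛ.2⟩
end
end

section
/- Let a < b and let α, β : (a,b) → ℝ³ be three times continuously differentiable curves with ‖α(s)‖ = ‖β(s)‖ = 1 and ‖α'(s)‖ = ‖β'(s)‖ = 1 for all s (unit-speed curves on the unit sphere), and define their spherical curvatures k_g[α](s) := α'(s) · (α''(s) × α(s)) and k_g[β](s) := β'(s) · (β''(s) × β(s)). Then there exists a rotation Λ ∈ SO(3) with α(s) = Λ β(s) for all s ∈ (a,b) if and only if k_g[α](s) = k_g[β](s) for all s ∈ (a,b). -/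
open Matrix

noncomputable section

/-- Euclidean norm on ℝ³. -/
def norm3 (v : Fin 3 → ℝ) : ℝ := Real.sqrt (v ⬝ᵥ v)

/-- Spherical curvature k_g[α](s) := α'·(α''×α) of a unit-speed curve α on the
unit sphere. -/
def sphericalCurvUnit (α : ℝ → Fin 3 → ℝ) (s : ℝ) : ℝ :=
  deriv α s ⬝ᵥ crossProduct (deriv (deriv α) s) (α s)

/-!
The Darboux frame `F = (W, W', W × W')` of a unit-speed spherical curve, written as a matrix of
rows, is a rotation solving the linear equation `F' = K F`, where the skew-symmetric matrix `K`
depends only on the spherical curvature. If `α` and `β` have the same curvature, then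
`(Fαᵀ Fβ)' = Fαᵀ (Kᵀ + K) Fβ = 0`, so `Fαᵀ Fβ` is a constant rotation, and it carries `β` to `α`.
Conversely the curvature is a triple product, which a matrix multiplies by its determinant.
-/

open scoped Topology

section Calculus

theorem hasDerivAt_bilin {𝕜 E F G : Type*} [NontriviallyNormedField 𝕜] [CompleteSpace 𝕜]
    [NormedAddCommGroup E] [NormedSpace 𝕜 E] [FiniteDimensional 𝕜 E]
    [NormedAddCommGroup F] [NormedSpace 𝕜 F] [FiniteDimensional 𝕜 F]
    [NormedAddCommGroup G] [NormedSpace 𝕜 G] (B : E →ₗ[𝕜] F →ₗ[𝕜] G)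
    {f : 𝕜 → E} {g : 𝕜 → F} {f' : E} {g' : F} {t : 𝕜}
    (hf : HasDerivAt f f' t) (hg : HasDerivAt g g' t) :
    HasDerivAt (fun x ↦ B (f x) (g x)) (B (f t) g' + B f' (g t)) t :=
  B.toContinuousBilinearMap.hasDerivAt_of_bilinear (fun _ ↦ hf) (fun _ ↦ hg)

theorem dotProduct_deriv_add_eq_zero {ι : Type*} [Fintype ι] {I : Set ℝ} (hI : IsOpen I)
    {f g : ℝ → ι → ℝ} (hf : DifferentiableOn ℝ f I) (hg : DifferentiableOn ℝ g I) {c : ℝ}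
    (hfg : ∀ t ∈ I, f t ⬝ᵥ g t = c) {s : ℝ} (hs : s ∈ I) :
    f s ⬝ᵥ deriv g s + deriv f s ⬝ᵥ g s = 0 := by
  have hI_nhds : I ∈ 𝓝 s := hI.mem_nhds hs
  have product_rule : HasDerivAt (fun t ↦ f t ⬝ᵥ g t)
      (f s ⬝ᵥ deriv g s + deriv f s ⬝ᵥ g s) s :=
    hasDerivAt_bilin (dotProductBilin ℝ ℝ) (hf.hasDerivAt hI_nhds) (hg.hasDerivAt hI_nhds)
  have deriv_const : HasDerivAt (fun t ↦ f t ⬝ᵥ g t) 0 s :=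
    (hasDerivAt_const s c).congr_of_eventuallyEq (Filter.eventually_of_mem hI_nhds hfg)
  exact product_rule.unique deriv_const

theorem deriv_eq_mulVec_deriv {m n : Type*} [Finite m] [Fintype n] {I : Set ℝ} (hI : IsOpen I)
    (Λ : Matrix m n ℝ) {f : ℝ → m → ℝ} {g : ℝ → n → ℝ} (hg : DifferentiableOn ℝ g I)
    (hfg : ∀ t ∈ I, f t = Λ *ᵥ g t) {s : ℝ} (hs : s ∈ I) :
    deriv f s = Λ *ᵥ deriv g s := by
  have := Fintype.ofFinite m
  have hI_nhds : I ∈ 𝓝 s := hI.mem_nhds hs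
  have hΛg : HasDerivAt (fun t ↦ Λ *ᵥ g t) (Λ *ᵥ deriv g s) s :=
    Λ.mulVecLin.toContinuousLinearMap.hasFDerivAt.comp_hasDerivAt s (hg.hasDerivAt hI_nhds)
  exact (hΛg.congr_of_eventuallyEq (Filter.eventually_of_mem hI_nhds hfg)).deriv

open scoped Matrix.Norms.Elementwise in
theorem transpose_mul_eq_of_skew_ode {l m n : Type*} [Finite l] [Fintype m] [Finite n]
    {I : Set ℝ} (hI : IsOpen I) (hIconn : IsPreconnected I)
    {K : ℝ → Matrix m m ℝ} {A : ℝ → Matrix m l ℝ} {B : ℝ → Matrix m n ℝ}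
    (hK : ∀ t ∈ I, (K t)ᵀ = -K t)
    (hA : ∀ t ∈ I, HasDerivAt A (K t * A t) t) (hB : ∀ t ∈ I, HasDerivAt B (K t * B t) t)
    {s t : ℝ} (hs : s ∈ I) (ht : t ∈ I) :
    (A s)ᵀ * B s = (A t)ᵀ * B t := by
  have := Fintype.ofFinite l
  have := Fintype.ofFinite n
  have deriv_zero : ∀ x ∈ I, HasDerivAt (fun y ↦ (A y)ᵀ * B y) 0 x := fun x hx ↦ by
    have hAT : HasDerivAt (fun y ↦ (A y)ᵀ) (K x * A x)ᵀ x :=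
      (transposeLinearEquiv m l ℝ ℝ).toLinearMap.toContinuousLinearMap.hasFDerivAt.comp_hasDerivAt
        x (hA x hx)
    refine (hasDerivAt_bilin (mulLinearMap ℝ) hAT (hB x hx)).congr_deriv ?_
    simp [transpose_mul, hK x hx, Matrix.mul_assoc]
  exact hI.is_const_of_deriv_eq_zero hIconn
    (fun x hx ↦ (deriv_zero x hx).differentiableAt.differentiableWithinAt)
    (fun x hx ↦ (deriv_zero x hx).deriv) hs ht

end Calculus

section CrossFrame

variable {R : Type*} [CommRing R]

theorem mem_specialOrthogonalGroup_iff_transpose_mul {n : Type*} [Fintype n] [DecidableEq n]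
    {Λ : Matrix n n R} : Λ ∈ specialOrthogonalGroup n R ↔ Λᵀ * Λ = 1 ∧ Λ.det = 1 := by
  rw [mem_specialOrthogonalGroup_iff, mem_orthogonalGroup_iff']

theorem transpose_mem_specialOrthogonalGroup {n : Type*} [Fintype n] [DecidableEq n]
    {Λ : Matrix n n R} (hΛ : Λ ∈ specialOrthogonalGroup n R) :
    Λᵀ ∈ specialOrthogonalGroup n R := by
  rw [mem_specialOrthogonalGroup_iff_transpose_mul] at hΛ ⊢
  exact ⟨mul_eq_one_comm.mp hΛ.1, Λ.det_transpose.trans hΛ.2⟩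

theorem mulVec_triple_product (Λ : Matrix (Fin 3) (Fin 3) R) (u v w : Fin 3 → R) :
    (Λ *ᵥ u) ⬝ᵥ (Λ *ᵥ v) ⨯₃ (Λ *ᵥ w) = Λ.det * (u ⬝ᵥ v ⨯₃ w) := by
  have rows_mul : of ![Λ *ᵥ u, Λ *ᵥ v, Λ *ᵥ w] = of ![u, v, w] * Λᵀ := by
    ext i j
    fin_cases i <;> simp [mul_apply, mulVec, dotProduct, mul_comm]
  calc (Λ *ᵥ u) ⬝ᵥ (Λ *ᵥ v) ⨯₃ (Λ *ᵥ w)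
      = (of ![Λ *ᵥ u, Λ *ᵥ v, Λ *ᵥ w]).det := triple_product_eq_det _ _ _
    _ = Λ.det * (of ![u, v, w]).det := by rw [rows_mul, det_mul, det_transpose, mul_comm]
    _ = Λ.det * (u ⬝ᵥ v ⨯₃ w) := by rw [triple_product_eq_det]; rfl

/-- The matrix with rows `u`, `v`, `u × v`. It is a rotation when `u`, `v` are orthonormal, and the
Darboux frame of a spherical curve `W` when `u = W s`, `v = W' s`. -/
def crossFrame (u v : Fin 3 → R) : Matrix (Fin 3) (Fin 3) R := of ![u, v, u ⨯₃ v]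

theorem crossFrame_mulVec (u v w : Fin 3 → R) :
    crossFrame u v *ᵥ w = ![u ⬝ᵥ w, v ⬝ᵥ w, u ⨯₃ v ⬝ᵥ w] := by
  ext i
  fin_cases i <;> rfl

theorem crossFrame_transpose_mulVec (u v : Fin 3 → R) (x y z : R) :
    (crossFrame u v)ᵀ *ᵥ ![x, y, z] = x • u + y • v + z • u ⨯₃ v := by
  ext i
  simp [crossFrame, mulVec, dotProduct, Fin.sum_univ_three, mul_comm]

/-- The coefficient matrix `K` of the Darboux equations `F' = K F` of a unit-speed spherical curve,
where `F` is its Darboux frame and `k` its spherical curvature. -/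
def darbouxMatrix (k : R) : Matrix (Fin 3) (Fin 3) R :=
  !![0, 1, 0; -1, 0, k; 0, -k, 0]

theorem darbouxMatrix_transpose (k : R) : (darbouxMatrix k)ᵀ = -darbouxMatrix k := by
  ext i j
  fin_cases i <;> fin_cases j <;> simp [darbouxMatrix]

theorem darbouxMatrix_mul_crossFrame (k : R) (u v : Fin 3 → R) :
    darbouxMatrix k * crossFrame u v = of ![v, -u + k • u ⨯₃ v, -k • v] := by
  ext i j
  fin_cases i <;> simp [darbouxMatrix, crossFrame, mul_apply, Fin.sum_univ_three]

variable {u v : Fin 3 → R}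

theorem cross_dot_cross_self_of_orthonormal (hu : u ⬝ᵥ u = 1) (hv : v ⬝ᵥ v = 1)
    (huv : u ⬝ᵥ v = 0) : u ⨯₃ v ⬝ᵥ u ⨯₃ v = 1 := by
  rw [cross_dot_cross, hu, hv, huv]
  ring

theorem crossFrame_mem_specialOrthogonalGroup (hu : u ⬝ᵥ u = 1) (hv : v ⬝ᵥ v = 1)
    (huv : u ⬝ᵥ v = 0) : crossFrame u v ∈ specialOrthogonalGroup (Fin 3) R := by
  have hvu : v ⬝ᵥ u = 0 := dotProduct_comm u v ▸ huv
  have hcross := cross_dot_cross_self_of_orthonormal hu hv huv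
  have hcross_u : u ⨯₃ v ⬝ᵥ u = 0 := by rw [dotProduct_comm, dot_self_cross]
  have hcross_v : u ⨯₃ v ⬝ᵥ v = 0 := by rw [dotProduct_comm, dot_cross_self]
  refine mem_specialOrthogonalGroup_iff_transpose_mul.mpr ⟨mul_eq_one_comm.mp ?_, ?_⟩
  · have gram : crossFrame u v * (crossFrame u v)ᵀ =
        !![u ⬝ᵥ u, u ⬝ᵥ v, u ⬝ᵥ u ⨯₃ v;
           v ⬝ᵥ u, v ⬝ᵥ v, v ⬝ᵥ u ⨯₃ v;
           u ⨯₃ v ⬝ᵥ u, u ⨯₃ v ⬝ᵥ v, u ⨯₃ v ⬝ᵥ u ⨯₃ v] := by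
      ext i j
      fin_cases i <;> fin_cases j <;> rfl
    rw [gram, hu, hv, huv, hvu, hcross, hcross_u, hcross_v, dot_self_cross, dot_cross_self,
      ← one_fin_three]
  · calc (crossFrame u v).det = u ⬝ᵥ v ⨯₃ (u ⨯₃ v) := (triple_product_eq_det _ _ _).symm
      _ = u ⨯₃ v ⬝ᵥ u ⨯₃ v := by rw [triple_product_permutation, triple_product_permutation]
      _ = 1 := hcross

theorem eq_crossFrame_expansion (hF : crossFrame u v ∈ specialOrthogonalGroup (Fin 3) R)
    (w : Fin 3 → R) : w = (u ⬝ᵥ w) • u + (v ⬝ᵥ w) • v + (u ⨯₃ v ⬝ᵥ w) • u ⨯₃ v := by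
  rw [← crossFrame_transpose_mulVec, ← crossFrame_mulVec, mulVec_mulVec,
    (mem_specialOrthogonalGroup_iff_transpose_mul.mp hF).1, one_mulVec]

end CrossFrame

theorem norm3_eq_one_iff {v : Fin 3 → ℝ} : norm3 v = 1 ↔ v ⬝ᵥ v = 1 :=
  Real.sqrt_eq_one

theorem sphericalCurvUnit_eq_cross_dot (α : ℝ → Fin 3 → ℝ) (s : ℝ) :
    sphericalCurvUnit α s = α s ⨯₃ deriv α s ⬝ᵥ deriv (deriv α) s := by
  rw [sphericalCurvUnit, triple_product_permutation, dotProduct_comm]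

theorem sphericalCurvUnit_eq_det_mul {I : Set ℝ} (hI : IsOpen I) {α β : ℝ → Fin 3 → ℝ}
    (hβ : DifferentiableOn ℝ β I) (hβ' : DifferentiableOn ℝ (deriv β) I)
    {Λ : Matrix (Fin 3) (Fin 3) ℝ} (hαβ : ∀ t ∈ I, α t = Λ *ᵥ β t) {s : ℝ} (hs : s ∈ I) :
    sphericalCurvUnit α s = Λ.det * sphericalCurvUnit β s := by
  have hderiv : ∀ t ∈ I, deriv α t = Λ *ᵥ deriv β t := fun _ ↦
    deriv_eq_mulVec_deriv hI Λ hβ hαβ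
  have hderiv2 : deriv (deriv α) s = Λ *ᵥ deriv (deriv β) s :=
    deriv_eq_mulVec_deriv hI Λ hβ' hderiv hs
  rw [sphericalCurvUnit, hαβ s hs, hderiv s hs, hderiv2, mulVec_triple_product, sphericalCurvUnit]

/-- `α` is a twice differentiable unit-speed curve on the unit sphere over the set `I` of
parameters. Derivatives are two-sided, so `I` is meant to be open. -/
structure IsUnitSpeedSpherical (α : ℝ → Fin 3 → ℝ) (I : Set ℝ) : Prop where
  differentiableOn : DifferentiableOn ℝ α I
  differentiableOn_deriv : DifferentiableOn ℝ (deriv α) I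
  norm3_eq_one : ∀ s ∈ I, norm3 (α s) = 1
  norm3_deriv_eq_one : ∀ s ∈ I, norm3 (deriv α s) = 1

namespace IsUnitSpeedSpherical

variable {α β : ℝ → Fin 3 → ℝ} {I : Set ℝ} {s : ℝ}

theorem of_contDiffOn (hI : IsOpen I) (hα : ContDiffOn ℝ 2 α I)
    (hnorm : ∀ s ∈ I, norm3 (α s) = 1) (hspeed : ∀ s ∈ I, norm3 (deriv α s) = 1) :
    IsUnitSpeedSpherical α I where
  differentiableOn := hα.differentiableOn (by norm_num)
  differentiableOn_deriv :=
    (hα.deriv_of_isOpen (m := 1) hI (by norm_num)).differentiableOn (by norm_num)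
  norm3_eq_one := hnorm
  norm3_deriv_eq_one := hspeed

theorem dot_self (hα : IsUnitSpeedSpherical α I) (hs : s ∈ I) : α s ⬝ᵥ α s = 1 :=
  norm3_eq_one_iff.mp (hα.norm3_eq_one s hs)

theorem deriv_dot_deriv (hα : IsUnitSpeedSpherical α I) (hs : s ∈ I) :
    deriv α s ⬝ᵥ deriv α s = 1 :=
  norm3_eq_one_iff.mp (hα.norm3_deriv_eq_one s hs)

theorem dot_deriv (hα : IsUnitSpeedSpherical α I) (hI : IsOpen I) (hs : s ∈ I) :
    α s ⬝ᵥ deriv α s = 0 := by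
  have h := dotProduct_deriv_add_eq_zero hI hα.differentiableOn hα.differentiableOn
    (fun _ ↦ hα.dot_self) hs
  rw [dotProduct_comm (deriv α s)] at h
  linarith

theorem deriv_dot_deriv_deriv (hα : IsUnitSpeedSpherical α I) (hI : IsOpen I) (hs : s ∈ I) :
    deriv α s ⬝ᵥ deriv (deriv α) s = 0 := by
  have h := dotProduct_deriv_add_eq_zero hI hα.differentiableOn_deriv hα.differentiableOn_deriv
    (fun _ ↦ hα.deriv_dot_deriv) hs
  rw [dotProduct_comm (deriv (deriv α) s)] at h
  linarith

theorem dot_deriv_deriv (hα : IsUnitSpeedSpherical α I) (hI : IsOpen I) (hs : s ∈ I) :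
    α s ⬝ᵥ deriv (deriv α) s = -1 := by
  have h := dotProduct_deriv_add_eq_zero hI hα.differentiableOn hα.differentiableOn_deriv
    (fun _ ↦ hα.dot_deriv hI) hs
  rw [hα.deriv_dot_deriv hs] at h
  linarith

theorem crossFrame_mem (hα : IsUnitSpeedSpherical α I) (hI : IsOpen I) (hs : s ∈ I) :
    crossFrame (α s) (deriv α s) ∈ specialOrthogonalGroup (Fin 3) ℝ :=
  crossFrame_mem_specialOrthogonalGroup (hα.dot_self hs) (hα.deriv_dot_deriv hs)
    (hα.dot_deriv hI hs)

theorem crossFrame_mulVec_self (hα : IsUnitSpeedSpherical α I) (hI : IsOpen I) (hs : s ∈ I) :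
    crossFrame (α s) (deriv α s) *ᵥ α s = ![1, 0, 0] := by
  rw [crossFrame_mulVec, hα.dot_self hs, dotProduct_comm (deriv α s), hα.dot_deriv hI hs,
    dotProduct_comm (_ ⨯₃ _), dot_self_cross]

theorem deriv_deriv_eq (hα : IsUnitSpeedSpherical α I) (hI : IsOpen I) (hs : s ∈ I) :
    deriv (deriv α) s = -α s + sphericalCurvUnit α s • α s ⨯₃ deriv α s := by
  rw [eq_crossFrame_expansion (hα.crossFrame_mem hI hs) (deriv (deriv α) s),
    hα.dot_deriv_deriv hI hs, hα.deriv_dot_deriv_deriv hI hs, ← sphericalCurvUnit_eq_cross_dot]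
  module

theorem hasDerivAt_cross_deriv (hα : IsUnitSpeedSpherical α I) (hI : IsOpen I) (hs : s ∈ I) :
    HasDerivAt (fun t ↦ α t ⨯₃ deriv α t) (-sphericalCurvUnit α s • deriv α s) s := by
  have hI_nhds : I ∈ 𝓝 s := hI.mem_nhds hs
  refine (hasDerivAt_bilin crossProduct (hα.differentiableOn.hasDerivAt hI_nhds)
    (hα.differentiableOn_deriv.hasDerivAt hI_nhds)).congr_deriv ?_
  calc α s ⨯₃ deriv (deriv α) s + deriv α s ⨯₃ deriv α s
      = sphericalCurvUnit α s • α s ⨯₃ (α s ⨯₃ deriv α s) := by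
        rw [hα.deriv_deriv_eq hI hs, map_add, map_neg, map_smul, cross_self, cross_self]
        module
    _ = -sphericalCurvUnit α s • deriv α s := by
        rw [cross_cross_eq_smul_sub_smul', hα.dot_self hs, hα.dot_deriv hI hs]
        module

open scoped Matrix.Norms.Elementwise in
theorem hasDerivAt_crossFrame (hα : IsUnitSpeedSpherical α I) (hI : IsOpen I) (hs : s ∈ I) :
    HasDerivAt (fun t ↦ crossFrame (α t) (deriv α t))
      (darbouxMatrix (sphericalCurvUnit α s) * crossFrame (α s) (deriv α s)) s := by
  have hI_nhds : I ∈ 𝓝 s := hI.mem_nhds hs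
  rw [darbouxMatrix_mul_crossFrame, ← hα.deriv_deriv_eq hI hs]
  refine hasDerivAt_pi.mpr fun i ↦ ?_
  fin_cases i
  · exact hα.differentiableOn.hasDerivAt hI_nhds
  · exact hα.differentiableOn_deriv.hasDerivAt hI_nhds
  · exact hα.hasDerivAt_cross_deriv hI hs

theorem exists_rotation_of_sphericalCurvUnit_eq (hα : IsUnitSpeedSpherical α I)
    (hβ : IsUnitSpeedSpherical β I) (hI : IsOpen I) (hIconn : IsConnected I)
    (hcurv : ∀ s ∈ I, sphericalCurvUnit α s = sphericalCurvUnit β s) :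
    ∃ Λ ∈ specialOrthogonalGroup (Fin 3) ℝ, ∀ s ∈ I, α s = Λ *ᵥ β s := by
  obtain ⟨c, hc⟩ := hIconn.nonempty
  let Fα (s : ℝ) := crossFrame (α s) (deriv α s)
  let Fβ (s : ℝ) := crossFrame (β s) (deriv β s)
  have hconst : ∀ s ∈ I, (Fα c)ᵀ * Fβ c = (Fα s)ᵀ * Fβ s := fun s hs ↦
    transpose_mul_eq_of_skew_ode hI hIconn.isPreconnected
      (fun t _ ↦ darbouxMatrix_transpose (sphericalCurvUnit α t))
      (fun _ ↦ hα.hasDerivAt_crossFrame hI)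
      (fun t ht ↦ hcurv t ht ▸ hβ.hasDerivAt_crossFrame hI ht) hc hs
  have hrot : (Fα c)ᵀ * Fβ c ∈ specialOrthogonalGroup (Fin 3) ℝ :=
    mul_mem (transpose_mem_specialOrthogonalGroup (hα.crossFrame_mem hI hc))
      (hβ.crossFrame_mem hI hc)
  refine ⟨(Fα c)ᵀ * Fβ c, hrot, fun s hs ↦ ?_⟩
  have hFα : (Fα s)ᵀ * Fα s = 1 :=
    (mem_specialOrthogonalGroup_iff_transpose_mul.mp (hα.crossFrame_mem hI hs)).1
  calc α s = (Fα s)ᵀ *ᵥ (Fα s *ᵥ α s) := by rw [mulVec_mulVec, hFα, one_mulVec]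
    _ = (Fα s)ᵀ *ᵥ (Fβ s *ᵥ β s) := by
        rw [hα.crossFrame_mulVec_self hI hs, hβ.crossFrame_mulVec_self hI hs]
    _ = ((Fα c)ᵀ * Fβ c) *ᵥ β s := by rw [mulVec_mulVec, hconst s hs]

end IsUnitSpeedSpherical

theorem spherical_curves_congruent_iff_general {I : Set ℝ} (hI : IsOpen I) (hIconn : IsConnected I)
    {α β : ℝ → Fin 3 → ℝ} (hα : IsUnitSpeedSpherical α I) (hβ : IsUnitSpeedSpherical β I) :
    (∃ Λ ∈ specialOrthogonalGroup (Fin 3) ℝ, ∀ s ∈ I, α s = Λ *ᵥ β s)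
      ↔ ∀ s ∈ I, sphericalCurvUnit α s = sphericalCurvUnit β s := by
  refine ⟨?_, hα.exists_rotation_of_sphericalCurvUnit_eq hβ hI hIconn⟩
  rintro ⟨Λ, hΛ, hαβ⟩ s hs
  rw [sphericalCurvUnit_eq_det_mul hI hβ.differentiableOn hβ.differentiableOn_deriv hαβ hs,
    (mem_specialOrthogonalGroup_iff.mp hΛ).2, one_mul]

/-- Two unit-speed curves on the unit sphere are related by a rotation in
SO(3) if and only if they have the same spherical curvature. -/
theorem spherical_curves_congruent_iff
    (a b : ℝ) (hab : a < b)
    (α β : ℝ → Fin 3 → ℝ)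
    (hα : ContDiffOn ℝ 3 α (Set.Ioo a b))
    (hβ : ContDiffOn ℝ 3 β (Set.Ioo a b))
    (hαnorm : ∀ s ∈ Set.Ioo a b, norm3 (α s) = 1)
    (hβnorm : ∀ s ∈ Set.Ioo a b, norm3 (β s) = 1)
    (hαspeed : ∀ s ∈ Set.Ioo a b, norm3 (deriv α s) = 1)
    (hβspeed : ∀ s ∈ Set.Ioo a b, norm3 (deriv β s) = 1) :
    (∃ Λ : Matrix (Fin 3) (Fin 3) ℝ, Λ.transpose * Λ = 1 ∧ Λ.det = 1 ∧
        ∀ s ∈ Set.Ioo a b, α s = Λ.mulVec (β s))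
      ↔ ∀ s ∈ Set.Ioo a b, sphericalCurvUnit α s = sphericalCurvUnit β s := by
  have hcongr := spherical_curves_congruent_iff_general isOpen_Ioo (isConnected_Ioo hab)
    (.of_contDiffOn isOpen_Ioo (hα.of_le (by norm_num)) hαnorm hαspeed)
    (.of_contDiffOn isOpen_Ioo (hβ.of_le (by norm_num)) hβnorm hβspeed)
  simpa only [mem_specialOrthogonalGroup_iff_transpose_mul, and_assoc] using hcongr
end
end
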